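/- arXiv:2601.05340 — 3 statements merged into one kernel-verified Lean document; each statement's English description precedes it below -/
import Mathlib

section
/- Let n ≥ 3 be an odd integer and let e : ZMod n → ZMod n be a function with e(0) = 0 such that e is a bijection of ZMod n and the map j ↦ j − e(j) is also a bijection of ZMod n. For ℓ ∈ ZMod n let P_ℓ be the n × n real matrix with (P_ℓ)_{r,s} = 1 if s = r + ℓ and 0 otherwise. Let H be the 3n × n² real block matrix whose (a, j) block (a ∈ Fin 3, j ∈ ZMod n) is P_0 if a = 0, P_j if a = 1, and P_{e(j)} if a = 2, and let G be the Tanner graph of H; assume G is connected. Then the cycle counts of G satisfy: N_4 = 0, N_6 = n²(n−1), N_8 = 3n²(n−1)(3n−5)/4, and N_10 = 3n²(n−1)(n−2)²; in particular G has girth exactly 6. -/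
/-!
The Tanner graph is the incidence graph of a 3-net of order `n`: the variable nodes are the `n²`
points of the net, the check nodes `(a, r)` are its lines, and line `(a, r)` of parallel class
`a ∈ Fin 3` consists of the points whose `a`-th coordinate is `r`. The bijectivity of `e` and of
`j ↦ j - e j` says exactly that any two of the three coordinates of a point can be prescribed
freely and determine it (`isNet_netMap`), that is, the third coordinate is a Latin square in the
other two (`IsNet.exists_latin`).

A rooted oriented cycle of length `2k` is a cyclic sequence of `2k` distinct vertices
(`cycleCount_eq`). Half of these start at a check node (`card_isCyc_split`), and those are
sequences of `k` lines and `k` points, alternately incident (`card_isLeft`). Consecutive lines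
belong to different parallel classes, so they determine their common point, and it remains to
count, for each cyclic sequence `a` of classes, the line labels `r` for which all lines and all
meeting points are distinct (`card_joins`, `classCount`). This count vanishes unless `a` is a proper
3-colouring of the `k`-cycle, and it is invariant under rotation of `a`. With `m` the Latin square:

* `k = 2`: two lines of different classes meet only once, so there is nothing to count.
* `k = 3`, 6 colourings `ABC`: the third label must differ from `m r₀ r₁`, giving `n²(n-1)`.
* `k = 4`, 6 colourings `ABAB`, each giving `n²(n-1)²`, and 12 colourings that are rotations of
  `ABAC`, each giving `n²(n-1)(n-2)`.
* `k = 5`, 30 colourings, all rotations of `CABAB`. With labels `(c, a₁, b₁, a₂, b₂)`, once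
  `a₁`, `b₂` and `c ≠ m a₁ b₂` are chosen, `b₁` and `a₂` can be chosen independently in `n - 2`
  ways each, giving `n²(n-1)(n-2)²`.

Finally the graph is bipartite, without 4-cycles and with a 6-cycle, so its girth is 6.
-/

open Matrix Finset

/-- The Tanner graph of a real matrix `H`: the simple bipartite graph on `α ⊕ β`
in which check node `i` is adjacent to variable node `j` iff `H i j = 1`. -/
def tannerGraph {α β : Type*} (H : Matrix α β ℝ) : SimpleGraph (α ⊕ β) :=
  SimpleGraph.fromRel (fun u v => ∃ i j, u = Sum.inl i ∧ v = Sum.inr j ∧ H i j = 1)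

/-- The number of pairs `(v, w)` where `w` is a closed walk of length `l` based at `v`
that is a cycle. -/
noncomputable def cycleCount {V : Type*} (G : SimpleGraph V) (l : ℕ) : ℕ :=
  Nat.card {p : Σ v : V, G.Walk v v // p.2.length = l ∧ p.2.IsCycle}

/-- `N_{2k}`: the number of cycles of length `2k` in `G`, as a real number. -/
noncomputable def numCycles {V : Type*} (G : SimpleGraph V) (k : ℕ) : ℝ :=
  (cycleCount G (2 * k) : ℝ) / (4 * k)

/-! ### Cycles as cyclic sequences of vertices -/

/-- A rooted oriented cycle of length `l ≥ 3`, encoded as the cyclic sequence of its vertices: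
addition in `Fin l` is modulo `l`, so the condition at the last index closes the cycle. -/
def IsCyc {V : Type*} (G : SimpleGraph V) (l : ℕ) [NeZero l] (f : Fin l → V) : Prop :=
  Function.Injective f ∧ ∀ i, G.Adj (f i) (f (i + 1))

lemma exists_walk_of_seq {V : Type*} (G : SimpleGraph V) (k : ℕ) (g : ℕ → V)
    (h : ∀ i < k, G.Adj (g i) (g (i + 1))) :
    ∃ w : G.Walk (g 0) (g k), w.length = k ∧ ∀ i ≤ k, w.getVert i = g i := by
  induction k generalizing g with
  | zero => exact ⟨.nil, rfl, fun i hi => by simp [Nat.le_zero.1 hi]⟩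
  | succ k ih =>
    obtain ⟨w, hl, hw⟩ := ih (fun i => g (i + 1)) (fun i hi => h (i + 1) (by omega))
    refine ⟨.cons (h 0 (by omega)) w, by simp [hl], fun i hi => ?_⟩
    cases i with
    | zero => simp
    | succ i => simpa using hw i (by omega)

/-- A cycle is determined by its vertex sequence `i ↦ getVert i`, and every injective cyclic sequence
of adjacent vertices arises in this way. -/
lemma cycleCount_eq {V : Type*} (G : SimpleGraph V) (l : ℕ) [NeZero l] (hl : 3 ≤ l) :
    cycleCount G l = Nat.card {f : Fin l → V // IsCyc G l f} := by
  refine Nat.card_congr (Equiv.ofBijective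
    (fun p => ⟨fun i => p.1.2.getVert i, ?_, ?_⟩) ⟨?_, ?_⟩)
  · obtain ⟨⟨v, w⟩, hlen, hc⟩ := p
    intro i j hij
    have := hc.getVert_injOn' (x₁ := i) (x₂ := j) (by simp at hlen ⊢; omega)
      (by simp at hlen ⊢; omega) hij
    exact Fin.ext this
  · obtain ⟨⟨v, w⟩, hlen, hc⟩ := p
    intro i
    simp only at hlen ⊢
    have h := w.adj_getVert_succ (i := i) (by omega)
    have hv : ((i + 1 : Fin l) : ℕ) = (i + 1) % l := by
      rw [Fin.val_add, Fin.val_one', Nat.add_mod_mod]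
    rw [hv]
    rcases Nat.lt_or_ge (i + 1) l with h1 | h1
    · rwa [Nat.mod_eq_of_lt h1]
    · have : (i : ℕ) + 1 = l := by omega
      have h2 : w.getVert (i + 1) = v := by rw [this, ← hlen]; simp
      rw [h2] at h
      simpa only [this, Nat.mod_self, w.getVert_zero] using h
  · rintro ⟨⟨v, w⟩, hlen, hc⟩ ⟨⟨v', w'⟩, hlen', hc'⟩ h
    simp only at hlen hlen'
    replace h := congrArg Subtype.val h
    have h0 := congrFun h 0
    simp at h0
    subst h0
    have : w = w' := by
      refine SimpleGraph.Walk.ext_getVert_le_length (hlen.trans hlen'.symm) fun k hk => ?_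
      rcases Nat.lt_or_ge k l with h1 | h1
      · exact congrFun h ⟨k, h1⟩
      · rw [w.getVert_of_length_le (by omega), w'.getVert_of_length_le (by omega)]
    subst this
    rfl
  · rintro ⟨f, hf, hadj⟩
    have hs : ∀ i, Fin.ofNat l (i + 1) = Fin.ofNat l i + 1 := fun i => by
      ext; simp [Fin.val_add]
    obtain ⟨w, hw, hg⟩ := exists_walk_of_seq G l (fun i => f (Fin.ofNat l i))
      (fun i _ => by simp only [hs]; exact hadj _)
    have hl0 : f (Fin.ofNat l l) = f (Fin.ofNat l 0) := by congr 1; ext; simp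
    refine ⟨⟨⟨_, w.copy rfl hl0⟩, ?_, ?_⟩, ?_⟩
    · simpa using hw
    · rw [SimpleGraph.Walk.isCycle_iff_isPath_tail_and_le_length]
      refine ⟨?_, by simp; omega⟩
      rw [← SimpleGraph.Walk.IsPath.getVert_injOn_iff]
      have hlt : (w.copy rfl hl0).tail.length + 1 = (w.copy rfl hl0).length := by
        apply SimpleGraph.Walk.length_tail_add_one
        rw [SimpleGraph.Walk.not_nil_iff_lt_length]; simp; omega
      simp only [SimpleGraph.Walk.length_copy, hw] at hlt
      intro i hi j hj hij
      simp only [Set.mem_ofPred_eq] at hi hj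
      rw [SimpleGraph.Walk.getVert_tail, SimpleGraph.Walk.getVert_tail,
        SimpleGraph.Walk.getVert_copy, SimpleGraph.Walk.getVert_copy,
        hg _ (by omega), hg _ (by omega)] at hij
      have := hf hij
      rw [hs, hs, add_left_inj] at this
      have := congrArg Fin.val this
      simpa [Nat.mod_eq_of_lt (show i < l by omega), Nat.mod_eq_of_lt (show j < l by omega)]
        using this
    · ext i
      simp only [SimpleGraph.Walk.getVert_copy]
      rw [hg i (by omega)]
      congr 1; ext; simp

lemma IsCyc.shift {V : Type*} {G : SimpleGraph V} {l : ℕ} [NeZero l] {f : Fin l → V} (j : Fin l) :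
    IsCyc G l (fun i => f (i + j)) ↔ IsCyc G l f := by
  constructor
  · rintro ⟨h1, h2⟩
    refine ⟨fun a b h => ?_, fun i => ?_⟩
    · have := @h1 (a - j) (b - j) (by simpa using h)
      simpa using this
    · have := h2 (i - j)
      simpa [sub_add_eq_add_sub] using this
  · rintro ⟨h1, h2⟩
    refine ⟨fun a b h => by simpa using h1 h, fun i => ?_⟩
    have := h2 (i + j)
    rwa [add_right_comm] at this

/-! ### Reduction to sequences of lines and points -/

/-- `G` is the incidence graph of the points `x : X`, with coordinates `φ x : Fin 3 → Z`, and the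
lines `(a, r)`, where `x` lies on `(a, r)` iff its `a`-th coordinate is `r`. -/
structure IsTannerGraph {Z X : Type*} (G : SimpleGraph ((Fin 3 × Z) ⊕ X)) (φ : X → Fin 3 → Z) :
    Prop where
  adj_iff : ∀ c x, G.Adj (.inl c) (.inr x) ↔ φ x c.1 = c.2
  not_adj_inl : ∀ c c', ¬ G.Adj (.inl c) (.inl c')
  not_adj_inr : ∀ x x', ¬ G.Adj (.inr x) (.inr x')

/-- The distinct lines `c 0, …, c (k - 1)` and distinct points `x 0, …, x (k - 1)` form a closed
polygon: `x i` lies on `c i` and on the cyclically next line. -/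
def Joins {Z X : Type*} (φ : X → Fin 3 → Z) (k : ℕ) [NeZero k] (c : Fin k → Fin 3 × Z)
    (x : Fin k → X) : Prop :=
  Function.Injective c ∧ Function.Injective x ∧
    ∀ i, φ (x i) (c i).1 = (c i).2 ∧ φ (x i) (c (i + 1)).1 = (c (i + 1)).2

/-- In a bipartite graph, moving the root one step along the cycle exchanges the cycles rooted in the
two parts, so exactly half of the rooted cycles start in the left part. -/
lemma card_isCyc_split {C X : Type*} [Finite C] [Finite X] (G : SimpleGraph (C ⊕ X))
    (hC : ∀ c c', ¬ G.Adj (.inl c) (.inl c')) (hX : ∀ x x', ¬ G.Adj (.inr x) (.inr x'))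
    (l : ℕ) [NeZero l] :
    Nat.card {f : Fin l → C ⊕ X // IsCyc G l f} =
      2 * Nat.card {f : Fin l → C ⊕ X // IsCyc G l f ∧ (f 0).isLeft} := by
  classical
  have e1 := Nat.card_congr (Equiv.sumCompl
    (fun f : {f : Fin l → C ⊕ X // IsCyc G l f} => (f.1 0).isLeft = true))
  rw [← e1, Nat.card_sum, two_mul]
  have hsw : ∀ f, IsCyc G l f → (¬ (f 0).isLeft = true ↔ (f 1).isLeft = true) := by
    intro f hf
    have h := hf.2 0
    rw [zero_add] at h
    rcases h0 : f 0 with c | x <;> rcases h1 : f 1 with c' | x' <;> rw [h0, h1] at h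
    · exact (hC _ _ h).elim
    · simp
    · simp
    · exact (hX _ _ h).elim
  congr 1
  · exact Nat.card_congr (Equiv.subtypeSubtypeEquivSubtypeInter (IsCyc G l)
      (fun f => (f 0).isLeft = true))
  · refine Nat.card_congr ((Equiv.subtypeSubtypeEquivSubtypeInter (IsCyc G l)
      (fun f => ¬ (f 0).isLeft = true)).trans
      (Equiv.subtypeEquiv (Equiv.arrowCongr (Equiv.subRight 1) (Equiv.refl _)) ?_))
    intro f
    have : (Equiv.arrowCongr (Equiv.subRight 1) (Equiv.refl (C ⊕ X))) f =
      fun i => f (i + 1) := by ext i; simp [Equiv.arrowCongr]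
    rw [this, IsCyc.shift]
    simp only [zero_add]
    constructor
    · rintro ⟨h1, h2⟩; exact ⟨h1, (hsw f h1).1 h2⟩
    · rintro ⟨h1, h2⟩; exact ⟨h1, (hsw f h1).2 h2⟩

lemma card_isLeft {Z X : Type*} {G : SimpleGraph ((Fin 3 × Z) ⊕ X)} {φ : X → Fin 3 → Z}
    (hG : IsTannerGraph G φ) (k : ℕ) [NeZero k] [NeZero (2 * k)] :
    Nat.card {f : Fin (2 * k) → (Fin 3 × Z) ⊕ X // IsCyc G (2 * k) f ∧ (f 0).isLeft} =
      Nat.card {p : (Fin k → Fin 3 × Z) × (Fin k → X) // Joins φ k p.1 p.2} := by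
  have hk : 0 < k := Nat.pos_of_ne_zero (NeZero.ne k)
  symm
  have hlt : ∀ j : Fin (2 * k), (j : ℕ) / 2 < k := fun j => by omega
  have hsucc : ∀ (m : ℕ) [NeZero m] (j : Fin m),
      ((j + 1 : Fin m) : ℕ) = if (j : ℕ) + 1 = m then 0 else (j : ℕ) + 1 := by
    intro m _ j
    rw [Fin.val_add, Fin.val_one', Nat.add_mod_mod]
    split_ifs with h
    · rw [h, Nat.mod_self]
    · exact Nat.mod_eq_of_lt (by omega)
  -- `F` interleaves lines (at even positions) and points (at odd positions).
  let F : (Fin k → Fin 3 × Z) × (Fin k → X) → Fin (2 * k) → (Fin 3 × Z) ⊕ X := fun p j =>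
    if (j : ℕ) % 2 = 0 then .inl (p.1 ⟨j / 2, hlt j⟩) else .inr (p.2 ⟨j / 2, hlt j⟩)
  have hF0 : ∀ p (i : Fin k) (h : 2 * (i : ℕ) < 2 * k), F p ⟨2 * i, h⟩ = .inl (p.1 i) := by
    intro p i h
    simp [F]
  have hF1 : ∀ p (i : Fin k) (h : 2 * (i : ℕ) + 1 < 2 * k),
      F p ⟨2 * i + 1, h⟩ = .inr (p.2 i) := by
    intro p i h
    have : (2 * (i : ℕ) + 1) / 2 = i := by omega
    simp [F, Nat.add_mod, this]
  have hFinj : Function.Injective F := by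
    intro p q h
    refine Prod.ext (funext fun i => ?_) (funext fun i => ?_)
    · have := congrFun h ⟨2 * i, by omega⟩
      rw [hF0, hF0] at this
      exact Sum.inl_injective this
    · have := congrFun h ⟨2 * i + 1, by omega⟩
      rw [hF1, hF1] at this
      exact Sum.inr_injective this
  have hidx : ∀ j : Fin (2 * k), (∃ i : Fin k, j = ⟨2 * i, by omega⟩) ∨
      ∃ i : Fin k, j = ⟨2 * i + 1, by omega⟩ := by
    intro j
    rcases Nat.even_or_odd' (j : ℕ) with ⟨b, hb | hb⟩
    · exact .inl ⟨⟨b, by omega⟩, Fin.ext hb⟩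
    · exact .inr ⟨⟨b, by omega⟩, Fin.ext hb⟩
  have hs0 : ∀ i : Fin k, (⟨2 * i, by omega⟩ + 1 : Fin (2 * k)) = ⟨2 * i + 1, by omega⟩ := by
    intro i
    ext
    rw [hsucc, if_neg (by simp only; omega)]
  have hs1 : ∀ i : Fin k, (⟨2 * i + 1, by omega⟩ + 1 : Fin (2 * k)) =
      ⟨2 * ((i + 1 : Fin k) : ℕ), by have := (i + 1).isLt; omega⟩ := by
    intro i
    ext
    simp only [hsucc]
    split_ifs <;> omega
  have hFcyc : ∀ p, IsCyc G (2 * k) (F p) ↔ Joins φ k p.1 p.2 := by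
    intro p
    constructor
    · rintro ⟨hinj, hadj⟩
      refine ⟨fun a b h => ?_, fun a b h => ?_, fun i => ⟨?_, ?_⟩⟩
      · have := @hinj ⟨2 * a, by omega⟩ ⟨2 * b, by omega⟩ (by rw [hF0, hF0, h])
        simp only [Fin.mk.injEq] at this
        omega
      · have := @hinj ⟨2 * a + 1, by omega⟩ ⟨2 * b + 1, by omega⟩ (by rw [hF1, hF1, h])
        simp only [Fin.mk.injEq] at this
        omega
      · have := hadj ⟨2 * i, by omega⟩
        rw [hs0, hF0, hF1] at this
        exact (hG.adj_iff _ _).1 this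
      · have := hadj ⟨2 * i + 1, by omega⟩
        rw [hs1, hF0, hF1] at this
        exact (hG.adj_iff _ _).1 this.symm
    · rintro ⟨hc, hx, h⟩
      refine ⟨fun a b hab => ?_, fun j => ?_⟩
      · rcases hidx a with ⟨i, rfl⟩ | ⟨i, rfl⟩ <;> rcases hidx b with ⟨i', rfl⟩ | ⟨i', rfl⟩ <;>
          simp only [hF0, hF1, Sum.inl.injEq, Sum.inr.injEq, reduceCtorEq] at hab
        · rw [hc hab]
        · rw [hx hab]
      · rcases hidx j with ⟨i, rfl⟩ | ⟨i, rfl⟩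
        · rw [hs0, hF0, hF1, hG.adj_iff]
          exact (h i).1
        · rw [hs1, hF0, hF1, SimpleGraph.adj_comm, hG.adj_iff]
          exact (h i).2
  refine Nat.card_congr (Equiv.ofBijective
    (fun p => ⟨F p.1, (hFcyc _).2 p.2, by simp [F]⟩) ⟨?_, ?_⟩)
  · intro p q h
    exact Subtype.ext (hFinj (congrArg Subtype.val h))
  · rintro ⟨f, hf, h0⟩
    have hside : ∀ j : ℕ, ∀ hj : j < 2 * k, (f ⟨j, hj⟩).isLeft = decide (j % 2 = 0) := by
      intro j
      induction j with
      | zero => intro hj; simpa using h0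
      | succ j ih =>
        intro hj
        have h1 := ih (by omega)
        have h2 := hf.2 ⟨j, by omega⟩
        have h3 : (⟨j, by omega⟩ + 1 : Fin (2 * k)) = ⟨j + 1, hj⟩ := by
          ext; rw [hsucc, if_neg (by simp only; omega)]
        rw [h3] at h2
        rcases e0 : f ⟨j, by omega⟩ with c | x <;> rcases e1 : f ⟨j + 1, hj⟩ with c' | x' <;>
          rw [e0] at h1 <;> rw [e0, e1] at h2
        · exact (hG.not_adj_inl _ _ h2).elim
        · simp at h1 ⊢; omega
        · simp at h1 ⊢; omega
        · exact (hG.not_adj_inr _ _ h2).elim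
    have hl : ∀ i : Fin k, ∃ c, f ⟨2 * i, by omega⟩ = .inl c := by
      intro i
      have := hside (2 * i) (by omega)
      simpa [Sum.isLeft_iff] using this
    have hr : ∀ i : Fin k, ∃ x, f ⟨2 * i + 1, by omega⟩ = .inr x := by
      intro i
      have := hside (2 * i + 1) (by omega)
      simpa [Nat.add_mod, Sum.isRight_iff] using this
    choose c hc using hl
    choose x hx using hr
    have hFf : F (c, x) = f := by
      ext1 j
      rcases hidx j with ⟨i, rfl⟩ | ⟨i, rfl⟩
      · rw [hF0, hc]
      · rw [hF1, hx]
    exact ⟨⟨(c, x), (hFcyc _).1 (hFf ▸ hf)⟩, Subtype.ext hFf⟩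

/-! ### Nets and the count for a fixed sequence of parallel classes -/

/-- The coordinates `φ` make `X` a 3-net over `Z`: any two coordinates of a point can be prescribed
and determine the point. -/
def IsNet {Z X : Type*} (φ : X → Fin 3 → Z) : Prop :=
  ∀ a b, a ≠ b → Function.Bijective fun x => (φ x a, φ x b)

/-- The lines `(a i, r i)` are the sides of a closed polygon with distinct sides and distinct
vertices. -/
def Closed {Z X : Type*} (φ : X → Fin 3 → Z) (k : ℕ) [NeZero k] (a : Fin k → Fin 3)
    (r : Fin k → Z) : Prop :=
  ∃ x, Joins φ k (fun i => (a i, r i)) x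

/-- The number of closed polygons whose `i`-th side lies in parallel class `a i`. -/
noncomputable def classCount {Z X : Type*} (φ : X → Fin 3 → Z) (k : ℕ) [NeZero k]
    (a : Fin k → Fin 3) : ℕ :=
  Nat.card {r : Fin k → Z // Closed φ k a r}

lemma fin_succ_ne {k : ℕ} [NeZero k] (hk : 2 ≤ k) (i : Fin k) : i + 1 ≠ i := by
  intro h
  have h1 : (1 : Fin k) = 0 := by simpa using h
  have := congrArg Fin.val h1
  rw [Fin.val_one', Nat.mod_eq_of_lt (by omega)] at this
  simp at this

lemma Joins.class_ne {Z X : Type*} {φ : X → Fin 3 → Z} {k : ℕ} [NeZero k] (hk : 2 ≤ k)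
    {c : Fin k → Fin 3 × Z} {x : Fin k → X} (h : Joins φ k c x) (i : Fin k) :
    (c i).1 ≠ (c (i + 1)).1 := by
  intro he
  have h1 := (h.2.2 i).1
  have h2 := (h.2.2 i).2
  rw [← he, h1] at h2
  exact fin_succ_ne hk i (h.1 (Prod.ext he h2)).symm

/-- Consecutive sides lie in different classes, hence determine their common vertex; so a polygon is
the same as its sequence of sides. -/
lemma card_joins {Z X : Type*} [Finite Z] {φ : X → Fin 3 → Z} (hφ : IsNet φ)
    (k : ℕ) [NeZero k] (hk : 2 ≤ k) :
    Nat.card {p : (Fin k → Fin 3 × Z) × (Fin k → X) // Joins φ k p.1 p.2} =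
      ∑ a, classCount φ k a := by
  unfold classCount
  rw [← Nat.card_sigma]
  refine Nat.card_congr (Equiv.ofBijective
    (fun p => ⟨fun i => (p.1.1 i).1, fun i => (p.1.1 i).2, p.1.2, p.2⟩) ⟨?_, ?_⟩)
  · rintro ⟨⟨c, x⟩, h⟩ ⟨⟨c', x'⟩, h'⟩ heq
    simp only [Sigma.mk.injEq] at heq
    obtain ⟨h1, h2⟩ := heq
    have hc : c = c' := by
      funext i
      refine Prod.ext (congrFun h1 i) ?_
      have : HEq (fun i => (c i).2) (fun i => (c' i).2) := by
        rw [Subtype.heq_iff_coe_heq rfl (by rw [h1])] at h2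
        exact h2
      exact congrFun (eq_of_heq this) i
    subst hc
    have hx : x = x' := by
      funext i
      refine (hφ _ _ (h.class_ne hk i)).1 ?_
      have a1 := h.2.2 i
      have a2 := h'.2.2 i
      simp only at a1 a2
      simp only [a1, a2]
    subst hx
    rfl
  · rintro ⟨a, r, x, h⟩
    exact ⟨⟨(fun i => (a i, r i), x), h⟩, rfl⟩

lemma classCount_eq_zero {Z X : Type*} (φ : X → Fin 3 → Z) {k : ℕ} [NeZero k] (hk : 2 ≤ k)
    {a : Fin k → Fin 3} (ha : ¬ ∀ i, a i ≠ a (i + 1)) : classCount φ k a = 0 := by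
  have : IsEmpty {r : Fin k → Z // Closed φ k a r} :=
    ⟨fun ⟨_, _, h⟩ => ha (h.class_ne hk)⟩
  exact Nat.card_of_isEmpty

lemma Closed.shift {Z X : Type*} {φ : X → Fin 3 → Z} {k : ℕ} [NeZero k] {a : Fin k → Fin 3}
    {r : Fin k → Z} (h : Closed φ k a r) (j : Fin k) :
    Closed φ k (fun i => a (i + j)) (fun i => r (i + j)) := by
  obtain ⟨x, h1, h2, h3⟩ := h
  refine ⟨fun i => x (i + j), fun p q h => by simpa using h1 h,
    fun p q h => by simpa using h2 h, fun i => ?_⟩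
  have := h3 (i + j)
  rwa [add_right_comm] at this

lemma classCount_shift {Z X : Type*} (φ : X → Fin 3 → Z) {k : ℕ} [NeZero k]
    (a : Fin k → Fin 3) (j : Fin k) :
    classCount φ k (fun i => a (i + j)) = classCount φ k a := by
  symm
  refine Nat.card_congr (Equiv.subtypeEquiv (Equiv.arrowCongr (Equiv.subRight j) (Equiv.refl _))
    fun r => ?_)
  have : (Equiv.arrowCongr (Equiv.subRight j) (Equiv.refl Z)) r = fun i => r (i + j) := by
    ext i; simp [Equiv.arrowCongr]
  rw [this]
  refine ⟨fun h => h.shift j, fun h => ?_⟩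
  simpa using h.shift (-j)

/-- For three distinct classes, the `C`-coordinate is a Latin square in the `A`- and
`B`-coordinates. -/
lemma IsNet.exists_latin {Z X : Type*} {φ : X → Fin 3 → Z} (hφ : IsNet φ) {A B C : Fin 3}
    (hAB : A ≠ B) (hAC : A ≠ C) (hBC : B ≠ C) :
    ∃ m : Z → Z → Z, (∀ x, φ x C = m (φ x A) (φ x B)) ∧ (∀ r, Function.Bijective (m r)) ∧
      ∀ s, Function.Bijective fun r => m r s := by
  choose p hp using (hφ A B hAB).2
  simp only [Prod.forall, Prod.mk.injEq] at hp
  have hm : ∀ x, φ x C = φ (p (φ x A, φ x B)) C := fun x => by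
    have : x = p (φ x A, φ x B) := (hφ A B hAB).1 (by simp [hp])
    rw [← this]
  refine ⟨fun r s => φ (p (r, s)) C, hm, fun r => ⟨fun s t h => ?_, fun t => ?_⟩,
    fun s => ⟨fun r t h => ?_, fun t => ?_⟩⟩
  · have := (hφ A C hAC).1 (a₁ := p (r, s)) (a₂ := p (r, t))
      (Prod.ext ((hp r s).1.trans (hp r t).1.symm) h)
    rw [← (hp r s).2, this, (hp r t).2]
  · obtain ⟨x, hx⟩ := (hφ A C hAC).2 (r, t)
    simp only [Prod.mk.injEq] at hx
    exact ⟨φ x B, by simp only; rw [← hx.1, ← hm, hx.2]⟩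
  · have := (hφ B C hBC).1 (a₁ := p (r, s)) (a₂ := p (t, s))
      (Prod.ext ((hp r s).2.trans (hp t s).2.symm) h)
    rw [← (hp r s).1, this, (hp t s).1]
  · obtain ⟨x, hx⟩ := (hφ B C hBC).2 (s, t)
    simp only [Prod.mk.injEq] at hx
    exact ⟨φ x A, by simp only; rw [← hx.1, ← hm, hx.2]⟩

lemma card_ne {Z : Type*} [Finite Z] (u : Z) : Nat.card {t : Z // t ≠ u} = Nat.card Z - 1 := by
  classical
  have := Fintype.ofFinite Z
  simp [Nat.card_eq_fintype_card, Fintype.card_subtype_compl]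

lemma card_ne_ne {Z : Type*} [Finite Z] {f : Z → Z} (hf : f.Bijective) {u c : Z} (h : f u ≠ c) :
    Nat.card {t : Z // t ≠ u ∧ f t ≠ c} = Nat.card Z - 2 := by
  classical
  have := Fintype.ofFinite Z
  obtain ⟨v, rfl⟩ := hf.2 c
  have huv : u ≠ v := fun e => h (by rw [e])
  rw [Nat.card_eq_fintype_card, Nat.card_eq_fintype_card, Fintype.card_subtype,
    ← Finset.card_pair huv, ← Finset.card_compl]
  congr 1
  ext t
  simp [hf.1.eq_iff]

lemma injective_fin3 {α : Type*} (f : Fin 3 → α) : Function.Injective f ↔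
    f 0 ≠ f 1 ∧ f 0 ≠ f 2 ∧ f 1 ≠ f 2 := by
  rw [← List.nodup_ofFn]
  simp [List.ofFn_succ]
  tauto

lemma injective_fin4 {α : Type*} (f : Fin 4 → α) : Function.Injective f ↔
    f 0 ≠ f 1 ∧ f 0 ≠ f 2 ∧ f 0 ≠ f 3 ∧ f 1 ≠ f 2 ∧ f 1 ≠ f 3 ∧ f 2 ≠ f 3 := by
  rw [← List.nodup_ofFn]
  simp [List.ofFn_succ]
  tauto

lemma injective_fin5 {α : Type*} (f : Fin 5 → α) : Function.Injective f ↔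
    f 0 ≠ f 1 ∧ f 0 ≠ f 2 ∧ f 0 ≠ f 3 ∧ f 0 ≠ f 4 ∧ f 1 ≠ f 2 ∧ f 1 ≠ f 3 ∧ f 1 ≠ f 4 ∧
      f 2 ≠ f 3 ∧ f 2 ≠ f 4 ∧ f 3 ≠ f 4 := by
  rw [← List.nodup_ofFn]
  simp [List.ofFn_succ]
  tauto

lemma IsNet.sep {Z X : Type*} {φ : X → Fin 3 → Z} (hφ : IsNet φ) {a b : Fin 3} (hab : a ≠ b)
    {x y : X} (h1 : φ x a = φ y a) (h2 : φ x b = φ y b) : x = y :=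
  (hφ a b hab).1 (Prod.ext h1 h2)

lemma IsNet.exists_pt {Z X : Type*} {φ : X → Fin 3 → Z} (hφ : IsNet φ) {a b : Fin 3} (hab : a ≠ b)
    (r s : Z) : ∃ x, φ x a = r ∧ φ x b = s := by
  obtain ⟨x, hx⟩ := (hφ a b hab).2 (r, s)
  exact ⟨x, congrArg Prod.fst hx, congrArg Prod.snd hx⟩

/-! ### Polygons with three, four and five sides -/

lemma closed_three_iff {Z X : Type*} {φ : X → Fin 3 → Z} (hφ : IsNet φ)
    {a : Fin 3 → Fin 3} (h01 : a 0 ≠ a 1) (h02 : a 0 ≠ a 2) (h12 : a 1 ≠ a 2) {m : Z → Z → Z}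
    (hm : ∀ x, φ x (a 2) = m (φ x (a 0)) (φ x (a 1))) (r : Fin 3 → Z) :
    Closed φ 3 a r ↔ r 2 ≠ m (r 0) (r 1) := by
  constructor
  · rintro ⟨x, -, hx, h⟩ he
    have h0 : φ (x 0) (a 0) = r 0 ∧ φ (x 0) (a 1) = r 1 := h 0
    have h1 : φ (x 1) (a 1) = r 1 ∧ φ (x 1) (a 2) = r 2 := h 1
    have : x 0 = x 1 := hφ.sep h12 (by grind) (by grind)
    exact absurd (hx this) (by decide)
  · intro hne
    obtain ⟨x0, hx0⟩ := hφ.exists_pt h01 (r 0) (r 1)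
    obtain ⟨x1, hx1⟩ := hφ.exists_pt h12 (r 1) (r 2)
    obtain ⟨x2, hx2⟩ := hφ.exists_pt h02 (r 0) (r 2)
    refine ⟨![x0, x1, x2], ?_, ?_, ?_⟩
    · rw [injective_fin3]
      grind
    · rw [injective_fin3]
      simp
      grind
    · simp [Fin.forall_fin_succ]
      grind

lemma classCount_three {Z X : Type*} [Finite Z] {φ : X → Fin 3 → Z} (hφ : IsNet φ)
    {a : Fin 3 → Fin 3} (ha : ∀ i, a i ≠ a (i + 1)) :
    classCount φ 3 a = Nat.card Z ^ 2 * (Nat.card Z - 1) := by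
  have h01 : a 0 ≠ a 1 := ha 0
  have h12 : a 1 ≠ a 2 := ha 1
  have h02 : a 0 ≠ a 2 := (ha 2).symm
  obtain ⟨m, hm, -, -⟩ := hφ.exists_latin h01 h02 h12
  have key := closed_three_iff hφ h01 h02 h12 hm
  have e : {r : Fin 3 → Z // Closed φ 3 a r} ≃ Σ p : Z × Z, {t : Z // t ≠ m p.1 p.2} :=
    { toFun := fun r => ⟨(r.1 0, r.1 1), r.1 2, (key r.1).1 r.2⟩
      invFun := fun s => ⟨![s.1.1, s.1.2, s.2.1], (key _).2 s.2.2⟩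
      left_inv := fun r => by ext i; fin_cases i <;> rfl
      right_inv := fun s => rfl }
  have := Fintype.ofFinite Z
  rw [classCount, Nat.card_congr e, Nat.card_sigma]
  simp only [card_ne, Finset.sum_const, Finset.card_univ, ← Nat.card_eq_fintype_card, Nat.card_prod,
    smul_eq_mul]
  ring

/-- Quadrilaterals of class pattern `ABAB`. -/
lemma closed_four_iff {Z X : Type*} {φ : X → Fin 3 → Z} (hφ : IsNet φ)
    {a : Fin 4 → Fin 3} (h02 : a 0 = a 2) (h13 : a 1 = a 3) (h01 : a 0 ≠ a 1) (r : Fin 4 → Z) :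
    Closed φ 4 a r ↔ r 2 ≠ r 0 ∧ r 3 ≠ r 1 := by
  constructor
  · rintro ⟨x, hc, -, -⟩
    rw [injective_fin4] at hc
    grind
  · intro hne
    obtain ⟨x0, hx0⟩ := hφ.exists_pt h01 (r 0) (r 1)
    obtain ⟨x1, hx1⟩ := hφ.exists_pt h01 (r 2) (r 1)
    obtain ⟨x2, hx2⟩ := hφ.exists_pt h01 (r 2) (r 3)
    obtain ⟨x3, hx3⟩ := hφ.exists_pt h01 (r 0) (r 3)
    refine ⟨![x0, x1, x2, x3], ?_, ?_, ?_⟩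
    · rw [injective_fin4]
      grind
    · rw [injective_fin4]
      simp
      grind
    · simp [Fin.forall_fin_succ]
      grind

lemma classCount_four {Z X : Type*} [Finite Z] {φ : X → Fin 3 → Z} (hφ : IsNet φ)
    {a : Fin 4 → Fin 3} (h02 : a 0 = a 2) (h13 : a 1 = a 3) (h01 : a 0 ≠ a 1) :
    classCount φ 4 a = Nat.card Z ^ 2 * (Nat.card Z - 1) ^ 2 := by
  have key := closed_four_iff hφ h02 h13 h01
  have e : {r : Fin 4 → Z // Closed φ 4 a r} ≃
      Σ p : Z × Z, {t : Z // t ≠ p.1} × {t : Z // t ≠ p.2} :=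
    { toFun := fun r => ⟨(r.1 0, r.1 1), ⟨r.1 2, ((key r.1).1 r.2).1⟩,
        ⟨r.1 3, ((key r.1).1 r.2).2⟩⟩
      invFun := fun s => ⟨![s.1.1, s.1.2, s.2.1.1, s.2.2.1], (key _).2 ⟨s.2.1.2, s.2.2.2⟩⟩
      left_inv := fun r => by ext i; fin_cases i <;> rfl
      right_inv := fun s => rfl }
  have := Fintype.ofFinite Z
  rw [classCount, Nat.card_congr e, Nat.card_sigma]
  simp only [card_ne, Finset.sum_const, Finset.card_univ, ← Nat.card_eq_fintype_card, Nat.card_prod,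
    smul_eq_mul]
  ring

/-- Quadrilaterals of class pattern `ABAC`. The conditions on `m` say that the side `r 3` does not
pass through either vertex on the side `r 1`. -/
lemma closed_four_iff' {Z X : Type*} {φ : X → Fin 3 → Z} (hφ : IsNet φ)
    {a : Fin 4 → Fin 3} (h02 : a 0 = a 2) (h01 : a 0 ≠ a 1) (h03 : a 0 ≠ a 3) (h13 : a 1 ≠ a 3)
    {m : Z → Z → Z} (hm : ∀ x, φ x (a 3) = m (φ x (a 0)) (φ x (a 1))) (r : Fin 4 → Z) :
    Closed φ 4 a r ↔ r 3 ≠ m (r 0) (r 1) ∧ r 2 ≠ r 0 ∧ m (r 2) (r 1) ≠ r 3 := by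
  constructor
  · rintro ⟨x, hc, hx, h⟩
    have h0 : φ (x 0) (a 0) = r 0 ∧ φ (x 0) (a 1) = r 1 := h 0
    have h1 : φ (x 1) (a 1) = r 1 ∧ φ (x 1) (a 2) = r 2 := h 1
    have h2 : φ (x 2) (a 2) = r 2 ∧ φ (x 2) (a 3) = r 3 := h 2
    have h3 : φ (x 3) (a 3) = r 3 ∧ φ (x 3) (a 0) = r 0 := h 3
    rw [injective_fin4] at hc
    refine ⟨fun he => ?_, by grind, fun he => ?_⟩
    · have : x 0 = x 3 := hφ.sep h03 (by grind) (by grind)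
      exact absurd (hx this) (by decide)
    · have : x 1 = x 2 := hφ.sep h03 (by grind) (by grind)
      exact absurd (hx this) (by decide)
  · intro hne
    obtain ⟨x0, hx0⟩ := hφ.exists_pt h01 (r 0) (r 1)
    obtain ⟨x1, hx1⟩ := hφ.exists_pt h01 (r 2) (r 1)
    obtain ⟨x2, hx2⟩ := hφ.exists_pt h03 (r 2) (r 3)
    obtain ⟨x3, hx3⟩ := hφ.exists_pt h03 (r 0) (r 3)
    refine ⟨![x0, x1, x2, x3], ?_, ?_, ?_⟩
    · rw [injective_fin4]
      grind
    · rw [injective_fin4]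
      simp
      grind
    · simp [Fin.forall_fin_succ]
      grind

lemma classCount_four' {Z X : Type*} [Finite Z] {φ : X → Fin 3 → Z} (hφ : IsNet φ)
    {a : Fin 4 → Fin 3} (h02 : a 0 = a 2) (h01 : a 0 ≠ a 1) (h03 : a 0 ≠ a 3) (h13 : a 1 ≠ a 3) :
    classCount φ 4 a = Nat.card Z ^ 2 * (Nat.card Z - 1) * (Nat.card Z - 2) := by
  obtain ⟨m, hm, -, hm2⟩ := hφ.exists_latin h01 h03 h13
  have key := closed_four_iff' hφ h02 h01 h03 h13 hm
  have e : {r : Fin 4 → Z // Closed φ 4 a r} ≃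
      Σ p : Z × Z, Σ c : {c : Z // c ≠ m p.1 p.2}, {t : Z // t ≠ p.1 ∧ m t p.2 ≠ c.1} :=
    { toFun := fun r => ⟨(r.1 0, r.1 1), ⟨r.1 3, ((key r.1).1 r.2).1⟩,
        ⟨r.1 2, ((key r.1).1 r.2).2⟩⟩
      invFun := fun s => ⟨![s.1.1, s.1.2, s.2.2.1, s.2.1.1], (key _).2 ⟨s.2.1.2, s.2.2.2⟩⟩
      left_inv := fun r => by ext i; fin_cases i <;> rfl
      right_inv := fun s => rfl }
  have := Fintype.ofFinite Z
  have hc : ∀ (p : Z × Z) (c : {c : Z // c ≠ m p.1 p.2}),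
      Nat.card {t : Z // t ≠ p.1 ∧ m t p.2 ≠ c.1} = Nat.card Z - 2 :=
    fun p c => card_ne_ne (hm2 p.2) c.2.symm
  classical
  rw [classCount, Nat.card_congr e, Nat.card_sigma]
  simp only [Nat.card_sigma, hc, Finset.sum_const, Finset.card_univ, ← Nat.card_eq_fintype_card,
    card_ne, Nat.card_prod, smul_eq_mul]
  ring

/-- Pentagons of class pattern `CABAB`. The three conditions on `m` say that the vertices on the
side `r 0` differ from each other and from the remaining vertices on the sides `r 1` and `r 4`.
They are grouped so that, given `r 0`, `r 1` and `r 4`, the conditions on `r 2` and `r 3` are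
independent. -/
lemma closed_five_iff {Z X : Type*} {φ : X → Fin 3 → Z} (hφ : IsNet φ)
    {a : Fin 5 → Fin 3} (h13 : a 1 = a 3) (h24 : a 2 = a 4) (h12 : a 1 ≠ a 2) (h10 : a 1 ≠ a 0)
    (h20 : a 2 ≠ a 0) {m : Z → Z → Z} (hm : ∀ x, φ x (a 0) = m (φ x (a 1)) (φ x (a 2)))
    (hm1 : ∀ r, Function.Injective (m r)) (r : Fin 5 → Z) :
    Closed φ 5 a r ↔ r 0 ≠ m (r 1) (r 4) ∧ (r 2 ≠ r 4 ∧ m (r 1) (r 2) ≠ r 0) ∧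
      (r 3 ≠ r 1 ∧ m (r 3) (r 4) ≠ r 0) := by
  constructor
  · rintro ⟨x, hc, hx, h⟩
    have h0 : φ (x 0) (a 0) = r 0 ∧ φ (x 0) (a 1) = r 1 := h 0
    have h1 : φ (x 1) (a 1) = r 1 ∧ φ (x 1) (a 2) = r 2 := h 1
    have h2 : φ (x 2) (a 2) = r 2 ∧ φ (x 2) (a 3) = r 3 := h 2
    have h3 : φ (x 3) (a 3) = r 3 ∧ φ (x 3) (a 4) = r 4 := h 3
    have h4 : φ (x 4) (a 4) = r 4 ∧ φ (x 4) (a 0) = r 0 := h 4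
    rw [injective_fin5] at hc
    refine ⟨fun he => ?_, ⟨by grind, fun he => ?_⟩, by grind, fun he => ?_⟩
    · have hb : φ (x 0) (a 2) = r 4 := hm1 (r 1) (by grind)
      have : x 0 = x 4 := hφ.sep h20 (by grind) (by grind)
      exact absurd (hx this) (by decide)
    · have : x 0 = x 1 := hφ.sep h10 (by grind) (by grind)
      exact absurd (hx this) (by decide)
    · have : x 3 = x 4 := hφ.sep h20 (by grind) (by grind)
      exact absurd (hx this) (by decide)
  · intro hne
    obtain ⟨x0, hx0⟩ := hφ.exists_pt h10 (r 1) (r 0)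
    obtain ⟨x1, hx1⟩ := hφ.exists_pt h12 (r 1) (r 2)
    obtain ⟨x2, hx2⟩ := hφ.exists_pt h12 (r 3) (r 2)
    obtain ⟨x3, hx3⟩ := hφ.exists_pt h12 (r 3) (r 4)
    obtain ⟨x4, hx4⟩ := hφ.exists_pt h20 (r 4) (r 0)
    refine ⟨![x0, x1, x2, x3, x4], ?_, ?_, ?_⟩
    · rw [injective_fin5]
      grind
    · rw [injective_fin5]
      simp
      grind
    · simp [Fin.forall_fin_succ]
      grind

lemma classCount_five {Z X : Type*} [Finite Z] {φ : X → Fin 3 → Z} (hφ : IsNet φ)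
    {a : Fin 5 → Fin 3} (h13 : a 1 = a 3) (h24 : a 2 = a 4) (h12 : a 1 ≠ a 2) (h10 : a 1 ≠ a 0)
    (h20 : a 2 ≠ a 0) :
    classCount φ 5 a = Nat.card Z ^ 2 * (Nat.card Z - 1) * (Nat.card Z - 2) ^ 2 := by
  obtain ⟨m, hm, hm1, hm2⟩ := hφ.exists_latin h12 h10 h20
  have key := closed_five_iff hφ h13 h24 h12 h10 h20 hm fun r => (hm1 r).1
  have e : {r : Fin 5 → Z // Closed φ 5 a r} ≃
      Σ p : Z × Z, Σ c : {c : Z // c ≠ m p.1 p.2},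
        {t : Z // t ≠ p.2 ∧ m p.1 t ≠ c.1} × {t : Z // t ≠ p.1 ∧ m t p.2 ≠ c.1} :=
    { toFun := fun r => ⟨(r.1 1, r.1 4), ⟨r.1 0, ((key r.1).1 r.2).1⟩,
        ⟨r.1 2, ((key r.1).1 r.2).2.1⟩, ⟨r.1 3, ((key r.1).1 r.2).2.2⟩⟩
      invFun := fun s => ⟨![s.2.1.1, s.1.1, s.2.2.1.1, s.2.2.2.1, s.1.2],
        (key _).2 ⟨s.2.1.2, s.2.2.1.2, s.2.2.2.2⟩⟩
      left_inv := fun r => by ext i; fin_cases i <;> rfl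
      right_inv := fun s => rfl }
  have := Fintype.ofFinite Z
  have hc : ∀ (p : Z × Z) (c : {c : Z // c ≠ m p.1 p.2}),
      Nat.card {t : Z // t ≠ p.1 ∧ m t p.2 ≠ c.1} = Nat.card Z - 2 :=
    fun p c => card_ne_ne (hm2 p.2) c.2.symm
  have hc' : ∀ (p : Z × Z) (c : {c : Z // c ≠ m p.1 p.2}),
      Nat.card {t : Z // t ≠ p.2 ∧ m p.1 t ≠ c.1} = Nat.card Z - 2 :=
    fun p c => card_ne_ne (hm1 p.1) c.2.symm
  classical
  rw [classCount, Nat.card_congr e, Nat.card_sigma]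
  simp only [Nat.card_sigma, Nat.card_prod, hc, hc', Finset.sum_const, Finset.card_univ,
    ← Nat.card_eq_fintype_card, card_ne, smul_eq_mul]
  ring

/-! ### Totals over all class patterns -/

lemma cycleCount_two_mul {Z X : Type*} [Finite Z] [Finite X] {G : SimpleGraph ((Fin 3 × Z) ⊕ X)}
    {φ : X → Fin 3 → Z} (hG : IsTannerGraph G φ) (hφ : IsNet φ) (k : ℕ) [NeZero k] (hk : 2 ≤ k) :
    cycleCount G (2 * k) = 2 * ∑ a, classCount φ k a := by
  have : NeZero (2 * k) := ⟨by omega⟩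
  rw [cycleCount_eq G (2 * k) (by omega), card_isCyc_split G hG.not_adj_inl hG.not_adj_inr,
    card_isLeft hG, card_joins hφ k hk]

lemma sum_classCount_two {Z X : Type*} {φ : X → Fin 3 → Z} (hφ : IsNet φ) :
    ∑ a, classCount φ 2 a = 0 := by
  refine Finset.sum_eq_zero fun a _ => ?_
  have : IsEmpty {r : Fin 2 → Z // Closed φ 2 a r} := by
    refine ⟨fun ⟨r, x, h⟩ => ?_⟩
    have h01 : a 0 ≠ a 1 := h.class_ne le_rfl 0
    have h0 : φ (x 0) (a 0) = r 0 ∧ φ (x 0) (a 1) = r 1 := h.2.2 0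
    have h1 : φ (x 1) (a 1) = r 1 ∧ φ (x 1) (a 0) = r 0 := h.2.2 1
    have : x 0 = x 1 := hφ.sep h01 (h0.1.trans h1.2.symm) (h0.2.trans h1.1.symm)
    exact absurd (h.2.1 this) (by decide)
  exact Nat.card_of_isEmpty

lemma sum_classCount_three {Z X : Type*} [Finite Z] {φ : X → Fin 3 → Z} (hφ : IsNet φ) :
    ∑ a, classCount φ 3 a = 6 * (Nat.card Z ^ 2 * (Nat.card Z - 1)) := by
  have h : ∀ a, classCount φ 3 a =
      if ∀ i, a i ≠ a (i + 1) then Nat.card Z ^ 2 * (Nat.card Z - 1) else 0 := by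
    intro a
    split_ifs with ha
    · exact classCount_three hφ ha
    · exact classCount_eq_zero φ (by norm_num) ha
  have hcard : #{a : Fin 3 → Fin 3 | ∀ i, a i ≠ a (i + 1)} = 6 := by decide +kernel
  simp_rw [h]
  rw [Finset.sum_ite, Finset.sum_const, Finset.sum_const_zero, hcard, smul_eq_mul, add_zero]

lemma sum_classCount_four {Z X : Type*} [Finite Z] {φ : X → Fin 3 → Z} (hφ : IsNet φ) :
    ∑ a, classCount φ 4 a = 6 * (Nat.card Z ^ 2 * (Nat.card Z - 1) ^ 2) +
      12 * (Nat.card Z ^ 2 * (Nat.card Z - 1) * (Nat.card Z - 2)) := by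
  have h : ∀ a, classCount φ 4 a =
      (if (∀ i, a i ≠ a (i + 1)) ∧ (a 0 = a 2 ∧ a 1 = a 3) then
        Nat.card Z ^ 2 * (Nat.card Z - 1) ^ 2 else 0) +
      (if (∀ i, a i ≠ a (i + 1)) ∧ ¬ (a 0 = a 2 ∧ a 1 = a 3) then
        Nat.card Z ^ 2 * (Nat.card Z - 1) * (Nat.card Z - 2) else 0) := by
    intro a
    by_cases ha : ∀ i, a i ≠ a (i + 1)
    · have h01 : a 0 ≠ a 1 := ha 0
      have h12 : a 1 ≠ a 2 := ha 1
      have h23 : a 2 ≠ a 3 := ha 2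
      have h30 : a 3 ≠ a 0 := ha 3
      by_cases h02 : a 0 = a 2 <;> by_cases h13 : a 1 = a 3
      · simp [ha, h02, h13, classCount_four hφ h02 h13 h01]
      · simp [ha, h02, h13, classCount_four' hφ h02 h01 h30.symm h13]
      · -- Rotating by one step turns the pattern `BACA` into `ACAB`.
        rw [← classCount_shift φ a 1, classCount_four' hφ h13 h12 h01.symm (Ne.symm h02)]
        simp [ha, h02]
      · exfalso
        omega
    · simp [ha, classCount_eq_zero φ (by norm_num) ha]
  have hcard : #{a : Fin 4 → Fin 3 | (∀ i, a i ≠ a (i + 1)) ∧ (a 0 = a 2 ∧ a 1 = a 3)} = 6 := by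
    decide +kernel
  have hcard' : #{a : Fin 4 → Fin 3 | (∀ i, a i ≠ a (i + 1)) ∧ ¬ (a 0 = a 2 ∧ a 1 = a 3)} =
      12 := by
    decide +kernel
  simp_rw [h]
  simp only [Finset.sum_add_distrib, Finset.sum_ite, Finset.sum_const, mul_zero,
    hcard, hcard', smul_eq_mul, add_zero]

/-- Every proper 3-colouring of the 5-cycle is a rotation of the pattern `CABAB`. -/
lemma exists_shift_five : ∀ a : Fin 5 → Fin 3, (∀ i, a i ≠ a (i + 1)) →
    ∃ j, a (1 + j) = a (3 + j) ∧ a (2 + j) = a (4 + j) := by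
  decide +kernel

lemma sum_classCount_five {Z X : Type*} [Finite Z] {φ : X → Fin 3 → Z} (hφ : IsNet φ) :
    ∑ a, classCount φ 5 a = 30 * (Nat.card Z ^ 2 * (Nat.card Z - 1) * (Nat.card Z - 2) ^ 2) := by
  have h : ∀ a, classCount φ 5 a = if ∀ i, a i ≠ a (i + 1) then
      Nat.card Z ^ 2 * (Nat.card Z - 1) * (Nat.card Z - 2) ^ 2 else 0 := by
    intro a
    split_ifs with ha
    · obtain ⟨j, h13, h24⟩ := exists_shift_five a ha
      have hs : ∀ i, a (i + j) ≠ a (i + 1 + j) := fun i => by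
        rw [add_right_comm]; exact ha _
      rw [← classCount_shift φ a j]
      refine classCount_five hφ h13 h24 (hs 1) (hs 0).symm ?_
      simp only [h24]
      exact hs 4
    · exact classCount_eq_zero φ (by norm_num) ha
  have hcard : #{a : Fin 5 → Fin 3 | ∀ i, a i ≠ a (i + 1)} = 30 := by decide +kernel
  simp_rw [h]
  rw [Finset.sum_ite, Finset.sum_const, Finset.sum_const_zero, hcard, smul_eq_mul, add_zero]

lemma egirth_eq_six {Z X : Type*} [Finite Z] [Finite X] {G : SimpleGraph ((Fin 3 × Z) ⊕ X)}
    {φ : X → Fin 3 → Z} (hG : IsTannerGraph G φ) (h4 : cycleCount G 4 = 0)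
    (h6 : cycleCount G 6 ≠ 0) : G.egirth = 6 := by
  have hfin : Finite {p : Σ v, G.Walk v v // p.2.length = 4 ∧ p.2.IsCycle} := by
    classical
    have := Fintype.ofFinite ((Fin 3 × Z) ⊕ X)
    have hr : DecidableRel G.Adj := Classical.decRel _
    have : Finite (Σ v, {w : G.Walk v v // w.length = 4}) := inferInstance
    refine Finite.of_injective (β := Σ v, {w : G.Walk v v // w.length = 4})
      (fun p => ⟨p.1.1, p.1.2, p.2.1⟩) ?_
    rintro ⟨⟨v, w⟩, h⟩ ⟨⟨v', w'⟩, h'⟩ he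
    simp only [Sigma.mk.injEq] at he
    obtain ⟨rfl, he⟩ := he
    simp only [heq_eq_eq, Subtype.mk.injEq] at he
    subst he
    rfl
  apply le_antisymm
  · obtain ⟨⟨⟨v, w⟩, hw, hc⟩⟩ := (Nat.card_ne_zero.1 h6).1
    have := SimpleGraph.egirth_le_length hc
    rw [hw] at this
    exact_mod_cast this
  · rw [SimpleGraph.le_egirth]
    intro v w hw
    have h3 := hw.three_le_length
    let col : G.Coloring Bool := SimpleGraph.Coloring.mk Sum.isLeft (by
      rintro (c | x) (c' | x') h
      · exact (hG.not_adj_inl _ _ h).elim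
      · simp
      · simp
      · exact (hG.not_adj_inr _ _ h).elim)
    have heven : Even w.length := (col.even_length_iff_congr w).2 Iff.rfl
    have hne : w.length ≠ 4 := by
      intro hw4
      have : IsEmpty {p : Σ v, G.Walk v v // p.2.length = 4 ∧ p.2.IsCycle} :=
        (Nat.card_eq_zero.1 h4).resolve_right fun hinf => hinf.not_finite hfin
      exact this.elim ⟨⟨v, w⟩, hw4, hw⟩
    have h6 : 6 ≤ w.length := by
      obtain ⟨b, hb⟩ := heven
      omega
    exact_mod_cast h6

/-! ### The net of the quasi-cyclic code -/

/-- The coordinates of the variable node `(j, s)`: the rows `r` of the check nodes `(0, r)`, `(1, r)`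
and `(2, r)` adjacent to it, namely `s`, `s - j` and `s - e j`. -/
def netMap {n : ℕ} (e : ZMod n → ZMod n) (x : ZMod n × ZMod n) (a : Fin 3) : ZMod n :=
  if a = 0 then x.2 else if a = 1 then x.2 - x.1 else x.2 - e x.1

lemma isNet_netMap {n : ℕ} [NeZero n] {e : ZMod n → ZMod n} (hbij : Function.Bijective e)
    (hbij' : Function.Bijective fun j : ZMod n => j - e j) : IsNet (netMap e) := by
  intro a b hab
  refine (Fintype.bijective_iff_injective_and_card _).2 ⟨?_, rfl⟩
  rintro ⟨j, s⟩ ⟨j', s'⟩ h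
  have h1 := hbij.1 (a₁ := j) (a₂ := j')
  have h2 : j - e j = j' - e j' → j = j' := fun h => hbij'.1 h
  simp only [Prod.mk.injEq] at h ⊢
  have hj : j = j' := by
    fin_cases a <;> fin_cases b <;> simp [netMap] at h hab ⊢ <;> grind
  subst hj
  refine ⟨rfl, ?_⟩
  fin_cases a <;> simp [netMap] at h <;> exact h.1

/-- The Tanner graph of the statement is the incidence graph of `netMap e`. -/
lemma isTannerGraph_netMap {n : ℕ} {e : ZMod n → ZMod n}
    {P : ZMod n → Matrix (ZMod n) (ZMod n) ℝ}
    (hP : ∀ ℓ r s, P ℓ r s = if s = r + ℓ then 1 else 0)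
    {H : Matrix (Fin 3 × ZMod n) (ZMod n × ZMod n) ℝ}
    (hH : ∀ x y, H x y = if x.1 = 0 then P 0 x.2 y.2 else if x.1 = 1 then P y.1 x.2 y.2
      else P (e y.1) x.2 y.2) :
    IsTannerGraph (tannerGraph H) (netMap e) where
  adj_iff := by
    rintro ⟨a, r⟩ ⟨j, s⟩
    have h1 : (tannerGraph H).Adj (.inl (a, r)) (.inr (j, s)) ↔ H (a, r) (j, s) = 1 := by
      simp [tannerGraph]
    rw [h1, hH]
    simp only [hP, netMap]
    split_ifs <;> simp_all [sub_eq_iff_eq_add]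
  not_adj_inl := by
    intro c c'
    simp [tannerGraph]
  not_adj_inr := by
    intro x x'
    simp [tannerGraph]

/-- Example 2 of the paper: cycle counts of the Tanner graphs of the girth-6
quasi-cyclic codes with polynomial parity-check matrix rows `(1,…,1)`,
`(1, x, …, x^{n-1})`, `(1, x^{e(1)}, …, x^{e(n-1)})` modulo `x^n - 1`:
`N_4 = 0`, `N_6 = n²(n−1)`, `N_8 = 3n²(n−1)(3n−5)/4`, `N_10 = 3n²(n−1)(n−2)²`, and
the girth is exactly `6`. -/
theorem example2_cycle_counts (n : ℕ) (hn : 3 ≤ n) (hodd : Odd n)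
    (e : ZMod n → ZMod n) (he0 : e 0 = 0) (hbij : Function.Bijective e)
    (hbij' : Function.Bijective fun j : ZMod n => j - e j)
    (P : ZMod n → Matrix (ZMod n) (ZMod n) ℝ)
    (hP : ∀ ℓ r s, P ℓ r s = if s = r + ℓ then 1 else 0)
    (H : Matrix (Fin 3 × ZMod n) (ZMod n × ZMod n) ℝ)
    (hH : ∀ x y, H x y = if x.1 = 0 then P 0 x.2 y.2 else if x.1 = 1 then P y.1 x.2 y.2
      else P (e y.1) x.2 y.2)
    (hconn : (tannerGraph H).Connected) :
    numCycles (tannerGraph H) 2 = 0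
    ∧ numCycles (tannerGraph H) 3 = (n : ℝ) ^ 2 * ((n : ℝ) - 1)
    ∧ numCycles (tannerGraph H) 4 = 3 * (n : ℝ) ^ 2 * ((n : ℝ) - 1) * (3 * (n : ℝ) - 5) / 4
    ∧ numCycles (tannerGraph H) 5 = 3 * (n : ℝ) ^ 2 * ((n : ℝ) - 1) * ((n : ℝ) - 2) ^ 2
    ∧ (tannerGraph H).egirth = 6 := by
  have : NeZero n := ⟨by omega⟩
  have hG := isTannerGraph_netMap hP hH
  have hφ := isNet_netMap hbij hbij'
  have h2 : cycleCount (tannerGraph H) (2 * 2) = 0 := by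
    rw [cycleCount_two_mul hG hφ 2 le_rfl, sum_classCount_two hφ]
  have h3 := cycleCount_two_mul hG hφ 3 (by norm_num)
  have h4 := cycleCount_two_mul hG hφ 4 (by norm_num)
  have h5 := cycleCount_two_mul hG hφ 5 (by norm_num)
  rw [sum_classCount_three hφ, Nat.card_zmod] at h3
  rw [sum_classCount_four hφ, Nat.card_zmod] at h4
  rw [sum_classCount_five hφ, Nat.card_zmod] at h5
  have c1 : ((n - 1 : ℕ) : ℝ) = n - 1 := by rw [Nat.cast_sub (by omega)]; simp
  have c2 : ((n - 2 : ℕ) : ℝ) = n - 2 := by rw [Nat.cast_sub (by omega)]; simp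
  refine ⟨?_, ?_, ?_, ?_, egirth_eq_six hG h2 ?_⟩
  · simp [numCycles, h2]
  · rw [numCycles, h3]
    push_cast [c1]
    ring
  · rw [numCycles, h4]
    push_cast [c1, c2]
    ring
  · rw [numCycles, h5]
    push_cast [c1, c2]
    ring
  · have hpos : 0 < n ^ 2 * (n - 1) := Nat.mul_pos (by positivity) (by omega)
    have h3' : cycleCount (tannerGraph H) 6 = 2 * (6 * (n ^ 2 * (n - 1))) := h3
    omega
end

section
/- For ℓ ∈ ZMod 31 let P_ℓ be the 31 × 31 real matrix with (P_ℓ)_{r,s} = 1 if s = r + ℓ and 0 otherwise. Let H be the 93 × 155 real block matrix given by the 3 × 5 array of blocks [[P_1, P_2, P_4, P_8, P_16], [P_5, P_10, P_20, P_9, P_18], [P_25, P_19, P_7, P_14, P_28]]. Then the characteristic polynomial of H·Hᵀ equals t²·(t − 15)·(t³ − 15t² + 62t − 62)^{30}; in particular H·Hᵀ has eigenvalue 15 with multiplicity 1, eigenvalue 0 with multiplicity 2, each of the three roots of t³ − 15t² + 62t − 62 as an eigenvalue with multiplicity 30, and the rank of H equals 91. -/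
/-!
Every block of `H Hᵀ` is a polynomial in the cyclic shift `P` of order 31, so all blocks commute.
By Silvester's theorem (`Matrix.det_det`) the characteristic polynomial of `H Hᵀ` is therefore
obtained by taking a `3 × 3` determinant over a polynomial ring in one variable `y`, substituting
`y = P`, and taking the determinant of the resulting `31 × 31` matrix.

Modulo `y ^ 31 - 1` the `3 × 3` determinant is `q(t) + 2 (1 - t) ∑_{n < 31} y ^ n` with
`q(t) = t³ - 15 t² + 62 t - 62` (`det_symbolMatrix`). The reason is that the location parameters
are `5 ^ i * 2 ^ j`, so that the off-diagonal entries are sums over the six cosets of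
`⟨2⟩ ⊆ (ZMod 31)ˣ`, and the symmetric expressions in them that occur are constant on
nontrivial characters. Substituting the shift turns the geometric sum into the all-ones matrix `J`,
and `det (q I + c J) = q ^ 30 (q + 31 c)` gives the formula, since
`q + 62 (1 - t) = t² (t - 15)`.

The multiplicities follow because `q` is separable and does not vanish at `0` and `15`; the rank is
the number `93 - 2` of nonzero eigenvalues of the symmetric matrix `H Hᵀ`.
-/

open Matrix Polynomial

/-- The exponents of the polynomial parity-check matrix. -/
def tannerL : Matrix (Fin 3) (Fin 5) (ZMod 31) :=
  !![1, 2, 4, 8, 16; 5, 10, 20, 9, 18; 25, 19, 7, 14, 28]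

/-- The cyclic shift, that is, the circulant permutation matrix corresponding to `x`. -/
def shift (R : Type*) [CommRing R] : Matrix (ZMod 31) (ZMod 31) R :=
  Matrix.of fun r s => if s = r + 1 then 1 else 0

lemma shift_pow_apply (R : Type*) [CommRing R] (n : ℕ) (r s : ZMod 31) :
    (shift R ^ n) r s = if s = r + n then 1 else 0 := by
  induction n generalizing s with
  | zero => simp [Matrix.one_apply, eq_comm]
  | succ n ih =>
    rw [pow_succ, Matrix.mul_apply]
    simp only [ih, ite_mul, one_mul, zero_mul, Finset.sum_ite_eq', Finset.mem_univ, if_true]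
    simp [shift, add_assoc]

/-- The `3 × 3` polynomial matrix `u I - H(y) H(y⁻¹)ᵀ`, where `y⁻¹` is encoded by reducing exponents
modulo 31 to `0, …, 30`. -/
def symbolMatrix {S : Type*} [CommRing S] (u y : S) : Matrix (Fin 3) (Fin 3) S :=
  Matrix.of fun i k => (if i = k then u else 0) - ∑ j, y ^ (tannerL i j - tannerL k j).val

/-- The sum of the products of opposite off-diagonal entries: modulo `y ^ 31 - 1` each nonzero
exponent occurs twice and the exponent zero 15 times. The witness is the quotient by
`y ^ 31 - 1`. -/
lemma sum_pow_prod {S : Type*} [CommRing S] (y : S) :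
    ∃ K : S, (y^15 + y^23 + y^27 + y^29 + y^30) * (y + y^2 + y^4 + y^8 + y^16)
      + (y^7 + y^14 + y^19 + y^25 + y^28) * (y^3 + y^6 + y^12 + y^17 + y^24)
      + (y^11 + y^13 + y^21 + y^22 + y^26) * (y^5 + y^9 + y^10 + y^18 + y^20)
      = 13 + 2 * ∑ n ∈ Finset.range 31, y ^ n + K * (y ^ 31 - 1) := by
  refine ⟨15 + 2*y^1 + 2*y^2 + 2*y^3 + 2*y^4 + 2*y^5 + 2*y^6 + 2*y^7 + 2*y^8 + 2*y^9 + y^10 +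
      2*y^11 + 2*y^12 + y^13 + 2*y^14 + 2*y^15 + y^18 + y^21, ?_⟩
  simp only [Finset.sum_range_succ, Finset.sum_range_zero]
  ring

/-- The two cyclic triple products of off-diagonal entries: modulo `y ^ 31 - 1` each nonzero
exponent occurs 8 times and the exponent zero 10 times. The witness is the quotient by
`y ^ 31 - 1`. -/
lemma sum_pow_triple {S : Type*} [CommRing S] (y : S) :
    ∃ K : S, (y^15 + y^23 + y^27 + y^29 + y^30) * (y^11 + y^13 + y^21 + y^22 + y^26) * (y^3 + y^6
        + y^12 + y^17 + y^24)
      + (y^7 + y^14 + y^19 + y^25 + y^28) * (y + y^2 + y^4 + y^8 + y^16) * (y^5 + y^9 + y^10 +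
          y^18 + y^20)
      = 2 + 8 * ∑ n ∈ Finset.range 31, y ^ n + K * (y ^ 31 - 1) := by
  refine ⟨10*y^0 + 8*y^1 + 8*y^2 + 8*y^3 + 8*y^4 + 8*y^5 + 8*y^6 + 8*y^7 + 8*y^8 + 8*y^9 + 8*y^10
      + 8*y^11 + 8*y^12 + 7*y^13 + 7*y^14 + 8*y^15 + 7*y^16 + 7*y^17 + 6*y^18 + 7*y^19 + 5*y^20 +
      6*y^21 + 8*y^22 + 7*y^23 + 6*y^24 + 4*y^25 + 5*y^26 + 5*y^27 + 4*y^28 + 4*y^29 + 6*y^30 +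
      5*y^31 + 2*y^32 + 4*y^33 + 4*y^34 + 3*y^35 + 3*y^36 + 4*y^37 + 2*y^38 + y^39 + 2*y^41 +
      3*y^42 + y^43 + 2*y^44 + y^45 + y^46 + y^48 + y^49, ?_⟩
  simp only [Finset.sum_range_succ, Finset.sum_range_zero]
  ring

lemma symbolMatrix_eq {S : Type*} [CommRing S] (u y : S) : symbolMatrix u y =
   !![u - 5, -(y^15 + y^23 + y^27 + y^29 + y^30), -(y^7 + y^14 + y^19 + y^25 + y^28);
      -(y + y^2 + y^4 + y^8 + y^16), u - 5, -(y^11 + y^13 + y^21 + y^22 + y^26);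
      -(y^3 + y^6 + y^12 + y^17 + y^24), -(y^5 + y^9 + y^10 + y^18 + y^20), u - 5] := by
  have h : ∀ i k j, (tannerL i j - tannerL k j).val =
    (![![![0,0,0,0,0], ![27,23,15,30,29], ![7,14,28,25,19]],
      ![![4,8,16,1,2],![0,0,0,0,0],![11,22,13,26,21]],
      ![![24,17,3,6,12],![20,9,18,5,10],![0,0,0,0,0]]] : Fin 3 → Fin 3 → Fin 5 → ℕ) i k j := by
    decide
  ext i k
  simp only [symbolMatrix, of_apply, h]
  fin_cases i <;> fin_cases k <;> simp [Fin.sum_univ_five] <;> ring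

lemma det_three_aux {S : Type*} [CommRing S] (v a b c a' b' c' : S) :
    (!![v, -a, -b; -a', v, -c; -b', -c', v]).det =
      v ^ 3 - v * (a * a' + b * b' + c * c') - (a * c * b' + b * a' * c') := by
  simp [det_fin_three]
  ring

lemma det_symbolMatrix {S : Type*} [CommRing S] (u y : S) : ∃ K : S,
    (symbolMatrix u y).det = (u ^ 3 - 15 * u ^ 2 + 62 * u - 62)
      + 2 * (1 - u) * ∑ n ∈ Finset.range 31, y ^ n + K * (y ^ 31 - 1) := by
  obtain ⟨K₁, h₁⟩ := sum_pow_prod y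
  obtain ⟨K₂, h₂⟩ := sum_pow_triple y
  rw [symbolMatrix_eq, det_three_aux, h₁, h₂]
  generalize ∑ n ∈ Finset.range 31, y ^ n = Z
  exact ⟨-(u - 5) * K₁ - K₂, by ring⟩

lemma shift_pow_card (R : Type*) [CommRing R] : shift R ^ 31 = 1 := by
  ext r s
  have : ((31 : ℕ) : ZMod 31) = 0 := ZMod.natCast_self 31
  rw [shift_pow_apply, this, Matrix.one_apply]
  simp [eq_comm]

lemma sum_shift_pow (R : Type*) [CommRing R] :
    ∑ n ∈ Finset.range 31, shift R ^ n = vecMulVec (fun _ => 1) (fun _ => 1) := by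
  ext r s
  rw [Matrix.sum_apply]
  simp only [shift_pow_apply, vecMulVec_apply, mul_one]
  rw [Finset.sum_eq_single (s - r).val]
  · simp
  · intro n hn hne
    rw [if_neg]
    rintro rfl
    apply hne
    rw [add_sub_cancel_left, ZMod.val_natCast, Nat.mod_eq_of_lt (Finset.mem_range.1 hn)]
  · intro h
    exact absurd (Finset.mem_range.2 (ZMod.val_lt _)) h

lemma det_scalar_sub_vecMulVec {R : Type*} [CommRing R] {n : Type*} [Fintype n] [DecidableEq n]
    (q : R) (u v : n → R) :
    (scalar n q - vecMulVec u v).det =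
      q ^ Fintype.card n - (u ⬝ᵥ v) * q ^ (Fintype.card n - 1) := by
  have h := congrArg (Polynomial.eval q) (charpoly_vecMulVec u v)
  rw [charpoly, eval_det, matPolyEquiv_charmatrix] at h
  simpa using h

/-- The real `93 × 155` parity-check matrix. -/
def tannerH : Matrix (Fin 3 × ZMod 31) (Fin 5 × ZMod 31) ℝ :=
  fun x y => if y.2 = x.2 + tannerL x.1 y.1 then 1 else 0

lemma gram_apply (i k : Fin 3) (r s : ZMod 31) :
    (tannerH * tannerHᵀ) (i, r) (k, s) =
      ∑ j, if s = r + (tannerL i j - tannerL k j) then 1 else 0 := by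
  rw [Matrix.mul_apply, Fintype.sum_prod_type]
  refine Finset.sum_congr rfl fun j _ => ?_
  simp only [tannerH, transpose_apply, mul_ite, mul_one, mul_zero, Finset.sum_ite_eq',
    Finset.mem_univ, if_true]
  congr 1
  rw [eq_iff_iff]
  constructor <;> intro h
  · linear_combination h
  · linear_combination h

/-- The block structure of `t I - H Hᵀ`: its blocks are the entries of `symbolMatrix` evaluated at
the shift. The inner polynomial variable is `t`, the outer one is `y`. -/
lemma charmatrix_eq_comp :
    charmatrix (tannerH * tannerHᵀ) =
      Matrix.comp _ _ _ _ _ ((symbolMatrix (C X : ℝ[X][X]) X).map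
        (aeval (R := ℝ[X]) (shift ℝ[X])).toRingHom) := by
  ext1 ⟨i, r⟩ ⟨k, s⟩
  rw [charmatrix_apply, gram_apply, comp_apply, map_apply]
  simp only [symbolMatrix, of_apply, AlgHom.toRingHom_eq_coe, RingHom.coe_coe, map_sub, map_sum,
    map_pow, aeval_X, Matrix.sub_apply, Matrix.sum_apply, shift_pow_apply, ZMod.natCast_zmod_val]
  congr 1
  · by_cases hik : i = k <;>
      simp [hik, diagonal_apply, algebraMap_matrix_apply]
  · simp [apply_ite]

lemma aeval_shift {R : Type*} [CommRing R] (q c : R) (K : R[X]) :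
    aeval (shift R) (C q + C c * ∑ n ∈ Finset.range 31, X ^ n + K * (X ^ 31 - 1)) =
      scalar (ZMod 31) q - vecMulVec (fun _ => -c) (fun _ => 1) := by
  simp only [map_add, map_mul, map_sum, map_sub, map_pow, aeval_X, aeval_C, map_one,
    shift_pow_card, sum_shift_pow, sub_self, mul_zero, add_zero]
  rw [← Algebra.smul_def]
  ext1 r s
  simp [vecMulVec_apply, algebraMap_matrix_apply, diagonal_apply]

lemma charpoly_gram : (tannerH * tannerHᵀ).charpoly =
    X ^ 2 * (X - C (15 : ℝ)) *
      (X ^ 3 - C (15 : ℝ) * X ^ 2 + C (62 : ℝ) * X - C (62 : ℝ)) ^ 30 := by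
  obtain ⟨K, hK⟩ := det_symbolMatrix (C X : ℝ[X][X]) X
  rw [charpoly, charmatrix_eq_comp, ← Matrix.det_det, hK]
  have h15 : (15 : ℝ[X][X]) = C 15 := rfl
  have h62 : (62 : ℝ[X][X]) = C 62 := rfl
  have h2 : (2 : ℝ[X][X]) = C 2 := rfl
  rw [h15, h62, h2, ← C_1]
  simp only [← C_mul, ← C_pow, ← C_sub, ← C_add]
  rw [AlgHom.toRingHom_eq_coe, RingHom.coe_coe, C_1, aeval_shift]
  rw [det_scalar_sub_vecMulVec, ZMod.card]
  simp only [dotProduct, Finset.sum_const, Finset.card_univ, ZMod.card]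
  have h15 : (C (15 : ℝ)) = 15 := rfl
  have h62 : (C (62 : ℝ)) = 62 := rfl
  rw [h15, h62, pow_succ _ 30]
  generalize hq : (X ^ 3 - 15 * X ^ 2 + 62 * X - 62 : ℝ[X]) ^ 30 = Q
  simp only [nsmul_eq_mul]
  push_cast
  ring

lemma rootMultiplicity_pow_aux (p : ℝ[X]) (n : ℕ) (t : ℝ) :
    (p ^ n).rootMultiplicity t = n * p.rootMultiplicity t := by
  rw [← count_roots, roots_pow, Multiset.count_nsmul, count_roots]

/-- The cubic `t³ - 15 t² + 62 t - 62`. -/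
noncomputable abbrev cubic : ℝ[X] := X ^ 3 - C (15 : ℝ) * X ^ 2 + C (62 : ℝ) * X - C (62 : ℝ)

lemma cubic_ne_zero : cubic ≠ 0 := by
  intro h
  have := congrArg (eval 0) h
  norm_num [cubic] at this

lemma rootMultiplicity_factored (t : ℝ) :
    (X ^ 2 * (X - C (15 : ℝ)) * cubic ^ 30).rootMultiplicity t =
      2 * (if t = 0 then 1 else 0) + (if t = 15 then 1 else 0) +
        30 * cubic.rootMultiplicity t := by
  have h0 : (X : ℝ[X]) ≠ 0 := X_ne_zero
  have h1 : X - C (15 : ℝ) ≠ 0 := X_sub_C_ne_zero _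
  have h2 := cubic_ne_zero
  have hX : (X : ℝ[X]).rootMultiplicity t = if t = 0 then 1 else 0 := by
    simpa using rootMultiplicity_X_sub_C (x := t) (y := (0 : ℝ))
  rw [rootMultiplicity_mul (by positivity), rootMultiplicity_mul (by positivity),
    rootMultiplicity_pow_aux, rootMultiplicity_pow_aux, rootMultiplicity_X_sub_C, hX]

lemma rootMultiplicity_cubic_of_not_root {t : ℝ} (h : t ^ 3 - 15 * t ^ 2 + 62 * t - 62 ≠ 0) :
    cubic.rootMultiplicity t = 0 :=
  rootMultiplicity_eq_zero (by simpa [cubic, IsRoot] using h)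

lemma rootMultiplicity_cubic_of_root {t : ℝ} (h : t ^ 3 - 15 * t ^ 2 + 62 * t - 62 = 0) :
    cubic.rootMultiplicity t = 1 := by
  have hr : cubic.IsRoot t := by simpa [cubic, IsRoot] using h
  have hpos := (rootMultiplicity_pos cubic_ne_zero).2 hr
  have hle : ¬ 1 < cubic.rootMultiplicity t := by
    rw [one_lt_rootMultiplicity_iff_isRoot cubic_ne_zero]
    rintro ⟨-, hd⟩
    have hd : 3 * t ^ 2 - 30 * t + 62 = 0 := by
      have : eval t (derivative cubic) = 0 := hd
      simp [cubic] at this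
      linarith
    -- A Bézout identity between the cubic and its derivative.
    have : (1 : ℝ) = 0 := by
      linear_combination (153 / 1085 - 117 / 4340 * t) * h +
        (11 / 70 - 57 / 620 * t + 39 / 4340 * t ^ 2) * hd
    norm_num at this
  omega

lemma rank_tannerH : tannerH.rank = 91 := by
  have hA : (tannerH * tannerHᵀ).IsHermitian := by
    simpa using isHermitian_mul_conjTranspose_self tannerH
  rw [← rank_self_mul_transpose, hA.rank_eq_card_non_zero_eigs]
  have hm : (tannerH * tannerHᵀ).charpoly.rootMultiplicity 0 = 2 := by
    rw [charpoly_gram, rootMultiplicity_factored, rootMultiplicity_cubic_of_not_root (by norm_num)]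
    norm_num
  rw [← count_roots, hA.roots_charpoly_eq_eigenvalues, Multiset.count_map] at hm
  have h2 : Fintype.card {i // hA.eigenvalues i = 0} = 2 := by
    rw [Fintype.card_subtype, ← hm]
    simp [Finset.card, eq_comm]
  have := Fintype.card_subtype_compl (fun i => hA.eigenvalues i = 0)
  rw [this, h2]
  simp [ZMod.card]

/-- Example 1 of the paper: for the `[155, 91, 20]` Tanner quasi-cyclic LDPC code with
lifting factor `N = 31`, the characteristic polynomial of `H Hᵀ` equals
`t²·(t − 15)·(t³ − 15t² + 62t − 62)³⁰`; in particular `15` is an eigenvalue of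
multiplicity `1`, `0` of multiplicity `2`, each root of `t³ − 15t² + 62t − 62` of
multiplicity `30`, and `rank H = 91`. -/
theorem tanner_code_charpoly :
    let L : Matrix (Fin 3) (Fin 5) (ZMod 31) :=
      !![1, 2, 4, 8, 16; 5, 10, 20, 9, 18; 25, 19, 7, 14, 28]
    let H : Matrix (Fin 3 × ZMod 31) (Fin 5 × ZMod 31) ℝ :=
      fun x y => if y.2 = x.2 + L x.1 y.1 then 1 else 0
    ((H * H.transpose).charpoly =
        X ^ 2 * (X - C (15 : ℝ)) *
          (X ^ 3 - C (15 : ℝ) * X ^ 2 + C (62 : ℝ) * X - C (62 : ℝ)) ^ 30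
      ∧ ((H * H.transpose).charpoly).rootMultiplicity (15 : ℝ) = 1
      ∧ ((H * H.transpose).charpoly).rootMultiplicity (0 : ℝ) = 2
      ∧ (∀ t : ℝ, t ^ 3 - 15 * t ^ 2 + 62 * t - 62 = 0 →
          ((H * H.transpose).charpoly).rootMultiplicity t = 30)
      ∧ H.rank = 91) := by
  intro L H
  change (tannerH * tannerHᵀ).charpoly = _ ∧
    (tannerH * tannerHᵀ).charpoly.rootMultiplicity 15 = 1 ∧
    (tannerH * tannerHᵀ).charpoly.rootMultiplicity 0 = 2 ∧
    (∀ t : ℝ, t ^ 3 - 15 * t ^ 2 + 62 * t - 62 = 0 →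
      (tannerH * tannerHᵀ).charpoly.rootMultiplicity t = 30) ∧ tannerH.rank = 91
  refine ⟨charpoly_gram, ?_, ?_, fun t ht => ?_, rank_tannerH⟩ <;>
    rw [charpoly_gram, rootMultiplicity_factored]
  · rw [rootMultiplicity_cubic_of_not_root (by norm_num)]
    norm_num
  · rw [rootMultiplicity_cubic_of_not_root (by norm_num)]
    norm_num
  · have h0 : t ≠ 0 := by rintro rfl; norm_num at ht
    have h15 : t ≠ 15 := by rintro rfl; norm_num at ht
    rw [rootMultiplicity_cubic_of_root ht, if_neg h0, if_neg h15]
end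

section
/- For ℓ ∈ ZMod 31 let P_ℓ be the 31 × 31 real matrix with (P_ℓ)_{r,s} = 1 if s = r + ℓ and 0 otherwise. Let H be the 93 × 155 real block matrix given by the 3 × 5 array of blocks [[P_1, P_2, P_4, P_8, P_16], [P_5, P_10, P_20, P_9, P_18], [P_25, P_19, P_7, P_14, P_28]], and let G be the Tanner graph of H. Then G has girth 8 and its cycle counts satisfy N_4 = 0, N_6 = 0, N_8 = 465, N_10 = 3720, N_12 = 22630, and N_14 = 156240. -/
/-!
Deleting the first edge of a rooted oriented cycle of length `k + 1 ≥ 3` leaves a path of length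
`k` from the head of that edge back to its tail, and every such path arises (`cycleEquiv`). So the
number of rooted oriented cycles is the sum, over the 930 oriented edges `v → w`, of the number of
paths of length `k` from `w` to `v`.

The shifts are `5 ^ i * 2 ^ j` modulo `31`, where `5` has order `3` and `2` has order `5`. Hence
cyclic shifts of the block rows and block columns, combined with affine maps of `ZMod 31`, are
automorphisms of the Tanner graph, and they act transitively on its edges (`autHom`,
`pathCount_edge`). Together with reversal of paths this shows that all 930 summands are equal
(`cycleCount_tanner`).

It remains to count the paths of length `k` between the two ends of one fixed edge, for `k = 2` to
`7` and `k = 9, 11, 13`. This is done by a depth-first search on natural numbers (`search`), with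
sets of nodes encoded as bit masks and with branches cut off when they are too far from the target;
`search_eq` proves it correct. The counts are `0` for `2 ≤ k < 7` and `8`, `80`, `584`, `4704` for
`k = 7, 9, 11, 13`, so that for instance `N_14 = 930 * 4704 / 28 = 156240`, and the girth is `8`.
-/

open Matrix Finset

namespace TannerCycles

/-! ### Counting paths and cycles in a graph with finite neighbourhoods -/

section General

variable {V : Type*} {G : SimpleGraph V}

/-- Paths of length `k` from `v` to `u` all of whose vertices lie in `S`. -/
abbrev PathsIn (G : SimpleGraph V) (S : Set V) (k : ℕ) (v u : V) : Type _ :=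
  {p : G.Walk v u // p.length = k ∧ p.IsPath ∧ ∀ x ∈ p.support, x ∈ S}

/-- A path of length `k + 1` starting at a vertex `v ∈ S` is a first step to a neighbour `w`
followed by a path of length `k` that avoids `v`. -/
noncomputable def pathsInSuccEquiv {S : Set V} {v u : V} (hv : v ∈ S) (k : ℕ) :
    (Σ w : {w // G.Adj v w}, PathsIn G (S \ {v}) k w.1 u) ≃ PathsIn G S (k + 1) v u :=
  Equiv.ofBijective
    (fun p => ⟨.cons p.1.2 p.2.1, by simp [p.2.2.1],
      (SimpleGraph.Walk.cons_isPath_iff _ _).2 ⟨p.2.2.2.1, fun hx => (p.2.2.2.2 _ hx).2 rfl⟩, by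
        intro x hx
        rcases List.mem_cons.1 (by simpa using hx) with rfl | hx
        · exact hv
        · exact (p.2.2.2.2 _ hx).1⟩) (by
    constructor
    · rintro ⟨⟨w, h⟩, q, hq⟩ ⟨⟨w', h'⟩, q', hq'⟩ e
      have e := congrArg Subtype.val e
      simp only [SimpleGraph.Walk.cons.injEq] at e
      obtain ⟨rfl, e⟩ := e
      cases e
      rfl
    · rintro ⟨p, hp, hpath, hS⟩
      cases p with
      | nil => simp at hp
      | cons h q =>
        rw [SimpleGraph.Walk.cons_isPath_iff] at hpath
        refine ⟨⟨⟨_, h⟩, q, by simpa using hp, hpath.1, fun x hx => ⟨hS x (by simp [hx]), ?_⟩⟩, rfl⟩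
        rintro rfl
        exact hpath.2 hx)

instance finite_pathsIn [Finite V] (S : Set V) (k : ℕ) (v u : V) : Finite (PathsIn G S k v u) := by
  classical
  have := Fintype.ofFinite V
  have : Finite {p : G.Walk v u | p.length = k} := by
    classical
    exact Finite.of_fintype _
  exact Finite.of_injective
    (β := {p : G.Walk v u | p.length = k}) (fun p => ⟨p.1, p.2.1⟩)
    fun p q h => Subtype.ext (Subtype.mk.inj h)

lemma card_pathsIn_zero {S : Set V} {u : V} (hu : u ∈ S) : Nat.card (PathsIn G S 0 u u) = 1 := by
  have : Unique (PathsIn G S 0 u u) :=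
    { default := ⟨.nil, by simp [hu]⟩
      uniq := by
        rintro ⟨p, hp, -⟩
        exact Subtype.ext (SimpleGraph.Walk.eq_nil_iff_nil.2 (SimpleGraph.Walk.length_eq_zero_iff.1 hp)) }
  exact Nat.card_unique

lemma sum_adj {M : Type*} [AddCommMonoid M] [DecidableEq V] {v : V} [Fintype {w // G.Adj v w}]
    {l : List V} (hl : l.Nodup) (h : ∀ w, G.Adj v w ↔ w ∈ l) (f : V → M) :
    ∑ w : {w // G.Adj v w}, f w = (l.map f).sum := by
  rw [← List.sum_toFinset f hl]
  exact (Finset.sum_subtype l.toFinset (fun w => by simp [h]) f).symm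

lemma card_pathsIn_succ [Finite V] [DecidableEq V] {S : Set V} {v u : V} (hv : v ∈ S) (k : ℕ)
    {l : List V} (hl : l.Nodup) (h : ∀ w, G.Adj v w ↔ w ∈ l) :
    Nat.card (PathsIn G S (k + 1) v u) =
      (l.map fun w => Nat.card (PathsIn G (S \ {v}) k w u)).sum := by
  have := Fintype.ofFinite {w // G.Adj v w}
  rw [← Nat.card_congr (pathsInSuccEquiv hv k), Nat.card_sigma]
  exact sum_adj hl h fun w => Nat.card (PathsIn G (S \ {v}) k w u)

/-- The number of paths of length `k` from `v` to `u`. -/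
noncomputable def pathCount (G : SimpleGraph V) (k : ℕ) (v u : V) : ℕ :=
  Nat.card (PathsIn G Set.univ k v u)

lemma pathCount_le_map [Finite V] (φ : G →g G) (hφ : Function.Injective φ) (k : ℕ) (v u : V) :
    pathCount G k v u ≤ pathCount G k (φ v) (φ u) :=
  Nat.card_le_card_of_injective
    (fun p => ⟨p.1.map φ, by simp [p.2.1], p.2.2.1.map hφ,
      by simp⟩)
    fun p q h => Subtype.ext (SimpleGraph.Walk.map_injective_of_injective hφ _ _
      (congrArg Subtype.val h))

lemma pathCount_le_symm [Finite V] (k : ℕ) (v u : V) : pathCount G k v u ≤ pathCount G k u v :=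
  Nat.card_le_card_of_injective
    (fun p => ⟨p.1.reverse, by simp [p.2.1], p.2.2.1.reverse, by simp⟩)
    fun p q h => Subtype.ext (SimpleGraph.Walk.reverse_injective (congrArg Subtype.val h))

lemma notMem_edges {k : ℕ} (hk : 2 ≤ k) {v w : V} {q : G.Walk w v} (hq : q.length = k)
    (hpath : q.IsPath) : s(v, w) ∉ q.edges := by
  intro he
  cases q with
  | nil => simp at he
  | cons h' r =>
    rw [SimpleGraph.Walk.cons_isPath_iff] at hpath
    rw [SimpleGraph.Walk.edges_cons, List.mem_cons] at he
    rcases he with he | he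
    · rw [Sym2.eq_swap, Sym2.congr_right] at he
      subst he
      have hr := SimpleGraph.Walk.length_eq_zero_iff.2 (SimpleGraph.Walk.isPath_iff_nil.1 hpath.1)
      rw [SimpleGraph.Walk.length_cons] at hq
      omega
    · exact hpath.2 (r.snd_mem_support_of_mem_edges he)

/-- A rooted oriented cycle of length `k + 1 ≥ 3` is a first step `v → w` followed by a path of
length `k` from `w` back to `v`; such a path cannot use the edge `vw`, being longer than one
edge. -/
noncomputable def cycleEquiv (G : SimpleGraph V) {k : ℕ} (hk : 2 ≤ k) :
    (Σ v : V, Σ w : {w // G.Adj v w}, PathsIn G Set.univ k w.1 v) ≃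
      {p : Σ v : V, G.Walk v v // p.2.length = k + 1 ∧ p.2.IsCycle} :=
  Equiv.ofBijective
    (fun p => ⟨⟨p.1, .cons p.2.1.2 p.2.2.1⟩, by simp [p.2.2.2.1],
      (SimpleGraph.Walk.cons_isCycle_iff _ _).2 ⟨p.2.2.2.2.1,
        notMem_edges hk p.2.2.2.1 p.2.2.2.2.1⟩⟩) (by
    constructor
    · rintro ⟨v, ⟨w, h⟩, q, hq⟩ ⟨v', ⟨w', h'⟩, q', hq'⟩ e
      have e := congrArg Subtype.val e
      simp only [Sigma.mk.injEq] at e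
      obtain ⟨rfl, e⟩ := e
      have e := eq_of_heq e
      simp only [SimpleGraph.Walk.cons.injEq] at e
      obtain ⟨rfl, e⟩ := e
      cases e
      rfl
    · rintro ⟨⟨v, p⟩, hp, hcyc⟩
      cases p with
      | nil => simp at hp
      | cons h q =>
        rw [SimpleGraph.Walk.cons_isCycle_iff] at hcyc
        exact ⟨⟨v, ⟨_, h⟩, q, by simpa using hp, hcyc.1, by simp⟩, rfl⟩)

lemma cycleCount_eq [Fintype V] [DecidableEq V] {k c : ℕ} (hk : 2 ≤ k) (nb : V → List V)
    (hl : ∀ v, (nb v).Nodup) (h : ∀ v w, G.Adj v w ↔ w ∈ nb v)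
    (hc : ∀ v w, G.Adj v w → pathCount G k w v = c) :
    cycleCount G (k + 1) = (∑ v, (nb v).length) * c := by
  have := fun v => Fintype.ofFinite {w // G.Adj v w}
  rw [cycleCount, ← Nat.card_congr (cycleEquiv G hk), Nat.card_sigma, Finset.sum_mul]
  refine Finset.sum_congr rfl fun v _ => ?_
  rw [Nat.card_sigma, Finset.sum_congr rfl fun w _ => hc v w.1 w.2, sum_adj (hl v) (h v) fun _ => c]
  simp

end General

/-! ### The Tanner graph and its automorphisms -/

/-- The shifts of the circulant blocks, `shift i j = 5 ^ i * 2 ^ j` modulo `31`. -/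
def shift : Matrix (Fin 3) (Fin 5) (ZMod 31) :=
  !![1, 2, 4, 8, 16; 5, 10, 20, 9, 18; 25, 19, 7, 14, 28]

/-- The parity-check matrix of the Tanner code. -/
noncomputable def parity : Matrix (Fin 3 × ZMod 31) (Fin 5 × ZMod 31) ℝ :=
  fun x y => if y.2 = x.2 + shift x.1 y.1 then 1 else 0

/-- The check nodes and variable nodes. -/
abbrev Node : Type := (Fin 3 × ZMod 31) ⊕ (Fin 5 × ZMod 31)

/-- The list of neighbours of a node. -/
def nodeNbrs : Node → List Node
  | .inl (i, r) => (List.finRange 5).map fun j => .inr (j, r + shift i j)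
  | .inr (j, s) => (List.finRange 3).map fun i => .inl (i, s - shift i j)

lemma adj_inl_inr (x : Fin 3 × ZMod 31) (y : Fin 5 × ZMod 31) :
    (tannerGraph parity).Adj (.inl x) (.inr y) ↔ y.2 = x.2 + shift x.1 y.1 := by
  obtain ⟨i, r⟩ := x
  obtain ⟨j, s⟩ := y
  simp [tannerGraph, parity]

lemma adj_iff_mem (v w : Node) : (tannerGraph parity).Adj v w ↔ w ∈ nodeNbrs v := by
  rcases v with ⟨i, r⟩ | ⟨j, s⟩ <;> rcases w with ⟨i', r'⟩ | ⟨j', s'⟩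
  · simp [tannerGraph, nodeNbrs]
  · rw [adj_inl_inr]
    simp [nodeNbrs, eq_comm]
  · rw [SimpleGraph.adj_comm, adj_inl_inr]
    simp [nodeNbrs, sub_eq_iff_eq_add]
  · simp [tannerGraph, nodeNbrs]

lemma nodup_nodeNbrs (v : Node) : (nodeNbrs v).Nodup := by
  rcases v with ⟨i, r⟩ | ⟨j, s⟩
  · exact (List.nodup_finRange 5).map fun a b h => by simp at h; exact h.1
  · exact (List.nodup_finRange 3).map fun a b h => by simp at h; exact h.1

lemma shift_mul (a i : Fin 3) (b j : Fin 5) :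
    shift a b * shift i j = shift (i + a) (j + b) := by
  revert a i b j
  decide +kernel

lemma shift_ne_zero (a : Fin 3) (b : Fin 5) : shift a b ≠ 0 := by
  intro h
  have h1 := shift_mul a (-a) b (-b)
  rw [h, zero_mul, neg_add_cancel, neg_add_cancel] at h1
  exact absurd h1 (by decide)

/-- Since `shift` is multiplicative, shifting the block rows by `a` and the block columns by `b`
while applying the affine map `x ↦ shift a b * x + t` inside the blocks is an automorphism.
These `3 * 5 * 31 = 465` maps permute the edges simply transitively. -/
def autHom (a : Fin 3) (b : Fin 5) (t : ZMod 31) : tannerGraph parity →g tannerGraph parity where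
  toFun
    | .inl (i, r) => .inl (i + a, shift a b * r + t)
    | .inr (j, s) => .inr (j + b, shift a b * s + t)
  map_rel' {v w} h := by
    have key : ∀ x y, (tannerGraph parity).Adj (.inl x) (.inr y) →
        (tannerGraph parity).Adj (.inl (x.1 + a, shift a b * x.2 + t))
          (.inr (y.1 + b, shift a b * y.2 + t)) := by
      intro x y h
      rw [adj_inl_inr] at h ⊢
      simp only [h, ← shift_mul]
      ring
    rcases v with x | y <;> rcases w with x' | y'
    · simp [tannerGraph] at h
    · exact key _ _ h
    · exact (key _ _ h.symm).symm
    · simp [tannerGraph] at h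

lemma autHom_injective (a : Fin 3) (b : Fin 5) (t : ZMod 31) :
    Function.Injective (autHom a b t) := by
  have : Fact (Nat.Prime 31) := ⟨by norm_num⟩
  rintro (⟨i, r⟩ | ⟨i, r⟩) (⟨j, s⟩ | ⟨j, s⟩) h
  all_goals simp [autHom, shift_ne_zero] at h ⊢
  all_goals exact h

/-- The base check node. -/
def root : Node := .inl (0, 0)

/-- A neighbour of the base check node. -/
def start : Node := .inr (0, 1)

lemma pathCount_edge (k : ℕ) (x : Fin 3 × ZMod 31) (y : Fin 5 × ZMod 31)
    (h : (tannerGraph parity).Adj (.inl x) (.inr y)) :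
    pathCount (tannerGraph parity) k (.inr y) (.inl x) =
      pathCount (tannerGraph parity) k start root := by
  obtain ⟨a, t⟩ := x
  obtain ⟨b, s⟩ := y
  rw [adj_inl_inr] at h
  simp only at h
  subst h
  have h00 : shift 0 0 = 1 := rfl
  apply le_antisymm
  · have := pathCount_le_map (autHom (-a) (-b) (-(shift (-a) (-b) * t)))
      (autHom_injective _ _ _) k (.inr (b, t + shift a b)) (.inl (a, t))
    have e1 : autHom (-a) (-b) (-(shift (-a) (-b) * t)) (.inl (a, t)) = root := by
      simp [autHom, root]
    have e2 : autHom (-a) (-b) (-(shift (-a) (-b) * t)) (.inr (b, t + shift a b)) = start := by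
      simp [autHom, start, mul_add, shift_mul, h00]
    rwa [e1, e2] at this
  · have := pathCount_le_map (autHom a b t) (autHom_injective _ _ _) k start root
    have e1 : autHom a b t root = .inl (a, t) := by simp [autHom, root]
    have e2 : autHom a b t start = .inr (b, t + shift a b) := by
      simp [autHom, start, add_comm]
    rwa [e1, e2] at this

lemma pathCount_adj (k : ℕ) (v w : Node) (h : (tannerGraph parity).Adj v w) :
    pathCount (tannerGraph parity) k w v = pathCount (tannerGraph parity) k start root := by
  rcases v with x | y <;> rcases w with x' | y'
  · simp [tannerGraph] at h
  · exact pathCount_edge k _ _ h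
  · rw [← pathCount_edge k _ _ h.symm]
    exact le_antisymm (pathCount_le_symm _ _ _) (pathCount_le_symm _ _ _)
  · simp [tannerGraph] at h

lemma cycleCount_tanner {k : ℕ} (hk : 2 ≤ k) :
    cycleCount (tannerGraph parity) (k + 1) =
      930 * pathCount (tannerGraph parity) k start root := by
  rw [cycleCount_eq hk nodeNbrs nodup_nodeNbrs adj_iff_mem (pathCount_adj k)]
  have h : ∑ v, (nodeNbrs v).length = 930 := by simp [nodeNbrs]
  rw [h]

/-! ### Counting paths from `start` to `root` by depth-first search -/

/-- The number of a node: check `(i, r)` is `31 * i + r` and variable `(j, s)` is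
`93 + 31 * j + s`. -/
def code : Node → ℕ
  | .inl (i, r) => 31 * i.val + r.val
  | .inr (j, s) => 93 + 31 * j.val + s.val

lemma code_injective : Function.Injective code := by
  rintro (⟨i, r⟩ | ⟨i, r⟩) (⟨j, s⟩ | ⟨j, s⟩) h <;> simp only [code] at h
  all_goals
    have hr := ZMod.val_lt r
    have hs := ZMod.val_lt s
    have hi := i.isLt
    have hj := j.isLt
  · have h1 : i = j := Fin.ext (by omega)
    have h2 : r = s := ZMod.val_injective 31 (by omega)
    rw [h1, h2]
  · omega
  · omega
  · have h1 : i = j := Fin.ext (by omega)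
    have h2 : r = s := ZMod.val_injective 31 (by omega)
    rw [h1, h2]

/-- Bit `v` of `m`. A natural number `m` is used as the set of those nodes whose bit is set.
As in the definitions below, the arithmetic is spelled with the functions on literals that the
kernel evaluates directly. -/
def bit (m v : ℕ) : Bool := Nat.beq (Nat.land (Nat.shiftRight m v) 1) 1

lemma bit_eq_testBit (m v : ℕ) : bit m v = m.testBit v := by
  change Nat.beq ((m >>> v) &&& 1) 1 = _
  rw [Nat.testBit, Nat.and_comm 1, Nat.and_one_is_mod]
  rcases Nat.mod_two_eq_zero_or_one (m >>> v) with h | h <;> rw [h] <;> rfl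

/-- The sum of `f` over the numbers of the neighbours of the node numbered `v`. The factor `30`
stands for `-1` modulo `31`, as a check neighbour of variable `(j, s)` has the form
`(i, s - shift i j)`. -/
def nbrSum (f : ℕ → ℕ) (v : ℕ) : ℕ :=
  Bool.rec
    ((fun s e =>
      Nat.add (f (Nat.mod (Nat.add s e) 31))
      (Nat.add (f (Nat.add 31 (Nat.mod (Nat.add s (Nat.mul 5 e)) 31)))
      (f (Nat.add 62 (Nat.mod (Nat.add s (Nat.mul 25 e)) 31)))))
      (Nat.mod v 31) (Nat.mul 30 (Nat.pow 2 (Nat.sub (Nat.div v 31) 3))))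
    ((fun r e =>
      Nat.add (f (Nat.add 93 (Nat.mod (Nat.add r e) 31)))
      (Nat.add (f (Nat.add 124 (Nat.mod (Nat.add r (Nat.mul 2 e)) 31)))
      (Nat.add (f (Nat.add 155 (Nat.mod (Nat.add r (Nat.mul 4 e)) 31)))
      (Nat.add (f (Nat.add 186 (Nat.mod (Nat.add r (Nat.mul 8 e)) 31)))
      (f (Nat.add 217 (Nat.mod (Nat.add r (Nat.mul 16 e)) 31)))))))
      (Nat.mod v 31) (Nat.pow 5 (Nat.div v 31)))
    (Nat.blt v 93)

lemma nbrSum_code (f : ℕ → ℕ) (v : Node) :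
    nbrSum f (code v) = ((nodeNbrs v).map fun w => f (code w)).sum := by
  have hl : ∀ x : Fin 3 × ZMod 31, Nat.blt (code (.inl x)) 93 = true ∧
      ∀ j : Fin 5, code (.inr (j, x.2 + shift x.1 j)) =
        93 + 31 * j + (code (.inl x) % 31 + 2 ^ j.val * 5 ^ (code (.inl x) / 31)) % 31 := by
    decide +kernel
  have hr : ∀ y : Fin 5 × ZMod 31, Nat.blt (code (.inr y)) 93 = false ∧
      ∀ i : Fin 3, code (.inl (i, y.2 - shift i y.1)) =
        31 * i +
          (code (.inr y) % 31 + 5 ^ i.val * (30 * 2 ^ (code (.inr y) / 31 - 3))) % 31 := by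
    decide +kernel
  rcases v with x | y
  · obtain ⟨h, hj⟩ := hl x
    have e : (nodeNbrs (.inl x)).map (fun w => f (code w)) =
        (List.finRange 5).map fun j => f (code (.inr (j, x.2 + shift x.1 j))) := by
      simp [nodeNbrs, Function.comp_def]
    simp only [e, hj, nbrSum, h]
    simp [List.finRange_succ, -Nat.mod_add_mod]
    rfl
  · obtain ⟨h, hi⟩ := hr y
    have e : (nodeNbrs (.inr y)).map (fun w => f (code w)) =
        (List.finRange 3).map fun i => f (code (.inl (i, y.2 - shift i y.1))) := by
      simp [nodeNbrs, Function.comp_def]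
    simp only [e, hi, nbrSum, h]
    simp [List.finRange_succ, -Nat.mod_add_mod]
    rfl

/-- `force n f` equals `f n`. The recursion makes the kernel evaluate `n` to a literal before it
substitutes it into `f`. -/
def force {α : Type} (n : ℕ) (f : ℕ → α) : α := Nat.rec (f 0) (fun k _ => f (Nat.succ k)) n

lemma force_eq {α : Type} (n : ℕ) (f : ℕ → α) : force n f = f n := by
  cases n <;> rfl

/-- A set containing every node from which some path of length `k` leads to `root`. It is exact
for walks of length `k ≤ 4`, apart from the removal of `root` for `k > 0`; for `k ≥ 5` it consists
of all nodes except `root`. -/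
def reach : ℕ → ℕ
  | 0 => 1
  | 1 => 13803492693606235981811789198428144584645900494078035083348988879962112
  | 2 => 1395176547759897997865910272
  | 3 => 7996324422148054309607077401058922914503610278598205740392449854989664256
  | 4 => 1817769798697181555216875518
  | _ => 452312848583266388373324160190187140051835877600158453279131187530910662654

/-- Depth-first count of the paths of length `k` from the node numbered `v` to `root`, all of whose
nodes belong to the set `m`. Branches leaving the sets `reach` are cut off. It is assumed that `v`
belongs to `m` and to `reach k`. -/
def search (k : ℕ) : ℕ → ℕ → ℕ :=
  Nat.rec (fun _ _ => 1)
    (fun k ih m v =>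
      force (Nat.xor m (Nat.shiftLeft 1 v)) fun m' =>
      force (Nat.land m' (reach k)) fun t =>
      nbrSum (fun w => force w fun w => Bool.rec 0 (ih m' w) (bit t w)) v) k

lemma search_succ (k m v : ℕ) :
    search (k + 1) m v = nbrSum (fun w =>
      if (m ^^^ 1 <<< v).testBit w ∧ (reach k).testBit w then
        search k (m ^^^ 1 <<< v) w else 0) v := by
  have h : search (k + 1) m v =
    force (m ^^^ 1 <<< v) fun m' => force (m' &&& reach k) fun t =>
      nbrSum (fun w => force w fun w => Bool.rec 0 (search k m' w) (bit t w)) v := rfl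
  rw [h, force_eq, force_eq]
  congr 1
  funext w
  rw [force_eq, bit_eq_testBit, Nat.testBit_and]
  cases (m ^^^ 1 <<< v).testBit w <;> cases (reach k).testBit w <;> simp

lemma reach_step (k : ℕ) (v w : Node) (hv : v ≠ root) (hw : w ∈ nodeNbrs v)
    (h : bit (reach k) (code w) = true) : bit (reach (k + 1)) (code v) = true := by
  have small : ∀ k : Fin 4, ∀ v : Node, v ≠ root → ∀ w ∈ nodeNbrs v,
      bit (reach k) (code w) = true → bit (reach (k + 1)) (code v) = true := by
    decide +kernel
  have large : ∀ v : Node, v ≠ root → bit (reach 5) (code v) = true := by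
    decide +kernel
  match k with
  | 0 => exact small 0 v hv w hw h
  | 1 => exact small 1 v hv w hw h
  | 2 => exact small 2 v hv w hw h
  | 3 => exact small 3 v hv w hw h
  | k + 4 => exact large v hv

lemma reach_of_path {k : ℕ} {S : Set Node} {v : Node}
    (p : PathsIn (tannerGraph parity) S k v root) : bit (reach k) (code v) = true := by
  induction k generalizing v S with
  | zero =>
    obtain ⟨p, hp, -⟩ := p
    obtain rfl := SimpleGraph.Walk.eq_of_length_eq_zero hp
    rfl
  | succ k ih =>
    obtain ⟨p, hp, hpath, hS⟩ := p
    cases p with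
    | nil => simp at hp
    | @cons _ w _ h q =>
      rw [SimpleGraph.Walk.cons_isPath_iff] at hpath
      refine reach_step k v w ?_ ((adj_iff_mem v w).1 h)
        (ih (S := Set.univ) ⟨q, by simpa using hp, hpath.1, by simp⟩)
      rintro rfl
      exact hpath.2 q.end_mem_support

lemma search_eq (k m : ℕ) (v : Node) (hm : m.testBit (code v) = true)
    (hk : (reach k).testBit (code v) = true) :
    search k m (code v) =
      Nat.card (PathsIn (tannerGraph parity) {x | m.testBit (code x) = true} k v root) := by
  induction k generalizing v m with
  | zero =>
    have hv : v = root := by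
      have h : code v = code root := by
        have : Nat.testBit 1 (code v) = true := hk
        exact Nat.testBit_one_eq_true_iff_self_eq_zero.1 this
      exact code_injective h
    subst hv
    rw [card_pathsIn_zero (show root ∈ {x | m.testBit (code x) = true} from hm)]
    rfl
  | succ k ih =>
    have hS : {x | (m ^^^ 1 <<< code v).testBit (code x) = true} =
        {x | m.testBit (code x) = true} \ {v} := by
      ext x
      by_cases hx : x = v
      · subst hx
        simp [Nat.testBit_xor, hm, Nat.testBit_shiftLeft]
      · have : code x ≠ code v := fun h => hx (code_injective h)
        have h2 : (1 <<< code v).testBit (code x) = false := by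
          rw [Nat.one_shiftLeft, Nat.testBit_two_pow_of_ne this.symm]
        simp [Nat.testBit_xor, hx, h2, -Nat.testBit_shiftLeft]
    rw [search_succ, nbrSum_code,
      card_pathsIn_succ (show v ∈ {x | m.testBit (code x) = true} from hm) k
        (nodup_nodeNbrs v) (adj_iff_mem v), ← hS]
    congr 1
    refine List.map_congr_left fun w _ => ?_
    split_ifs with hw
    · exact ih _ w hw.1 hw.2
    · symm
      rw [Finite.card_eq_zero_iff]
      refine ⟨fun p => hw ⟨p.2.2.2 w p.1.start_mem_support, ?_⟩⟩
      rw [← bit_eq_testBit]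
      exact reach_of_path p

/-- All numbers of nodes are below `248`, so `2 ^ 248 - 1` is the set of all nodes. -/
lemma pathCount_eq_search (k : ℕ) (hk : bit (reach k) 94 = true) :
    pathCount (tannerGraph parity) k start root = search k (2 ^ 248 - 1) 94 := by
  have hall : ∀ v : Node, (2 ^ 248 - 1).testBit (code v) = true := by
    intro v
    rw [Nat.testBit_two_pow_sub_one, decide_eq_true_iff]
    rcases v with ⟨i, r⟩ | ⟨i, r⟩ <;> simp only [code] <;>
    · have hr := ZMod.val_lt r
      omega
  rw [bit_eq_testBit] at hk
  have h := search_eq k (2 ^ 248 - 1) start (hall _) hk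
  simp only [hall] at h
  exact h.symm

lemma pathCount_eq_zero (k : ℕ) (hk : bit (reach k) 94 = false) :
    pathCount (tannerGraph parity) k start root = 0 := by
  rw [pathCount, Finite.card_eq_zero_iff]
  refine ⟨fun p => ?_⟩
  have : bit (reach k) 94 = true := reach_of_path p
  simp [hk] at this

lemma pathCount_small (k : ℕ) (h2 : 2 ≤ k) (h7 : k < 7) :
    pathCount (tannerGraph parity) k start root = 0 := by
  interval_cases k
  · exact pathCount_eq_zero 2 rfl
  · exact (pathCount_eq_search 3 rfl).trans (by decide +kernel)
  · exact pathCount_eq_zero 4 rfl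
  · exact (pathCount_eq_search 5 rfl).trans (by decide +kernel)
  · exact (pathCount_eq_search 6 rfl).trans (by decide +kernel)

lemma pathCount_7 : pathCount (tannerGraph parity) 7 start root = 8 :=
  (pathCount_eq_search 7 rfl).trans (by decide +kernel)

lemma pathCount_9 : pathCount (tannerGraph parity) 9 start root = 80 :=
  (pathCount_eq_search 9 rfl).trans (by decide +kernel)

lemma pathCount_11 : pathCount (tannerGraph parity) 11 start root = 584 :=
  (pathCount_eq_search 11 rfl).trans (by decide +kernel)

lemma pathCount_13 : pathCount (tannerGraph parity) 13 start root = 4704 :=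
  (pathCount_eq_search 13 rfl).trans (Nat.eq_of_beq_eq_true (by decide +kernel))

lemma egirth_tanner : (tannerGraph parity).egirth = 8 := by
  apply le_antisymm
  · have h8 : cycleCount (tannerGraph parity) 8 ≠ 0 := by
      rw [cycleCount_tanner (k := 7) (by norm_num), pathCount_7]
      norm_num
    obtain ⟨⟨⟨v, w⟩, hw, hc⟩⟩ := (Nat.card_ne_zero.1 h8).1
    have := SimpleGraph.egirth_le_length hc
    rw [hw] at this
    exact_mod_cast this
  · rw [SimpleGraph.le_egirth]
    intro v w hc
    by_contra! hlt
    have hlt : w.length < 8 := by exact_mod_cast hlt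
    have h3 := hc.three_le_length
    obtain ⟨k, hk⟩ : ∃ k, w.length = k + 1 := ⟨w.length - 1, by omega⟩
    have h0 := cycleCount_tanner (k := k) (by omega)
    rw [pathCount_small k (by omega) (by omega), mul_zero, cycleCount,
      Nat.card_congr (cycleEquiv _ (by omega : 2 ≤ k)).symm, Finite.card_eq_zero_iff] at h0
    exact h0.false (((cycleEquiv _ (by omega : 2 ≤ k)).symm) ⟨⟨v, w⟩, hk, hc⟩)

end TannerCycles

/-- Example 1 of the paper: the Tanner graph of the `[155, 91, 20]` Tanner quasi-cyclic
LDPC code with lifting factor `N = 31` has girth `8` and cycle counts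
`N_4 = 0`, `N_6 = 0`, `N_8 = 465`, `N_10 = 3720`, `N_12 = 22630`, `N_14 = 156240`. -/
theorem tanner_code_cycle_counts :
    let L : Matrix (Fin 3) (Fin 5) (ZMod 31) :=
      !![1, 2, 4, 8, 16; 5, 10, 20, 9, 18; 25, 19, 7, 14, 28]
    let H : Matrix (Fin 3 × ZMod 31) (Fin 5 × ZMod 31) ℝ :=
      fun x y => if y.2 = x.2 + L x.1 y.1 then 1 else 0
    ((tannerGraph H).egirth = 8
      ∧ numCycles (tannerGraph H) 2 = 0
      ∧ numCycles (tannerGraph H) 3 = 0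
      ∧ numCycles (tannerGraph H) 4 = 465
      ∧ numCycles (tannerGraph H) 5 = 3720
      ∧ numCycles (tannerGraph H) 6 = 22630
      ∧ numCycles (tannerGraph H) 7 = 156240) := by
  intro L H
  change (tannerGraph TannerCycles.parity).egirth = 8
    ∧ numCycles (tannerGraph TannerCycles.parity) 2 = 0
    ∧ numCycles (tannerGraph TannerCycles.parity) 3 = 0
    ∧ numCycles (tannerGraph TannerCycles.parity) 4 = 465
    ∧ numCycles (tannerGraph TannerCycles.parity) 5 = 3720
    ∧ numCycles (tannerGraph TannerCycles.parity) 6 = 22630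
    ∧ numCycles (tannerGraph TannerCycles.parity) 7 = 156240
  refine ⟨TannerCycles.egirth_tanner, ?_, ?_, ?_, ?_, ?_, ?_⟩
  · rw [numCycles, TannerCycles.cycleCount_tanner (k := 3) (by norm_num),
      TannerCycles.pathCount_small 3 (by norm_num) (by norm_num)]
    norm_num
  · rw [numCycles, TannerCycles.cycleCount_tanner (k := 5) (by norm_num),
      TannerCycles.pathCount_small 5 (by norm_num) (by norm_num)]
    norm_num
  · rw [numCycles, TannerCycles.cycleCount_tanner (k := 7) (by norm_num),
      TannerCycles.pathCount_7]
    norm_num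
  · rw [numCycles, TannerCycles.cycleCount_tanner (k := 9) (by norm_num),
      TannerCycles.pathCount_9]
    norm_num
  · rw [numCycles, TannerCycles.cycleCount_tanner (k := 11) (by norm_num),
      TannerCycles.pathCount_11]
    norm_num
  · rw [numCycles, TannerCycles.cycleCount_tanner (k := 13) (by norm_num),
      TannerCycles.pathCount_13]
    norm_num
end
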